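/- For every integer M ≥ 0 there is a constant C_M > 0 such that for all X ≥ 3, the number of integers a with 0 < |a| ≤ X for which rank(E_a(ℚ)) > ω(a) − M is at most C_M · X / log log X, where E_a is the elliptic curve y² = x³ + a over ℚ. -/

import Mathlib

open TensorProduct

/-- The elliptic curve `y² = x³ + a` over `ℚ`. -/
noncomputable def Ea (a : ℤ) : WeierstrassCurve.Affine ℚ :=
  { a₁ := 0, a₂ := 0, a₃ := 0, a₄ := 0, a₆ := (a : ℚ) }

/-- The Mordell–Weil rank of a Weierstrass curve over `ℚ`: the dimension of the
`ℚ`-vector space `E(ℚ) ⊗_ℤ ℚ`. -/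
noncomputable def mwRank (W : WeierstrassCurve.Affine ℚ) : Cardinal :=
  Module.rank ℚ (ℚ ⊗[ℤ] W.Point)

/-- The number of distinct prime factors of a nonzero integer. -/
def omega (n : ℤ) : ℕ := n.natAbs.primeFactors.card



open WeierstrassCurve.Affine

set_option linter.unusedSectionVars false
set_option linter.unusedSimpArgs false
set_option linter.style.longLine false

/-- The curve `y² = x³ + a` over a field. -/
def Ew {F : Type*} [Field F] (a : F) : WeierstrassCurve.Affine F :=
  { a₁ := 0, a₂ := 0, a₃ := 0, a₄ := 0, a₆ := a }

section basic
variable {F : Type*} [Field F] [CharZero F] {a : F}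

lemma Ew_equation (x y : F) : (Ew a).Equation x y ↔ y ^ 2 = x ^ 3 + a := by
  rw [WeierstrassCurve.Affine.equation_iff]; simp [Ew]

lemma Ew_nonsing (ha : a ≠ 0) (x y : F) : (Ew a).Nonsingular x y ↔ y ^ 2 = x ^ 3 + a := by
  rw [← Ew_equation]
  refine (WeierstrassCurve.Affine.equation_iff_nonsingular_of_Δ_ne_zero (W := Ew a) ?_).symm
  simp [Ew, WeierstrassCurve.Δ, WeierstrassCurve.b₂, WeierstrassCurve.b₄, WeierstrassCurve.b₆,
    WeierstrassCurve.b₈, ha]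

lemma Ew_eq {x y : F} (h : (Ew a).Nonsingular x y) : y ^ 2 = x ^ 3 + a :=
  (Ew_equation x y).1 h.1

lemma Ew_negY (x y : F) : (Ew a).negY x y = -y := by
  simp [WeierstrassCurve.Affine.negY, Ew]

lemma Ew_addX (x y l : F) : (Ew a).addX x y l = l ^ 2 - x - y := by
  simp [WeierstrassCurve.Affine.addX, Ew]

lemma Ew_addY (x₁ x₂ y l : F) : (Ew a).addY x₁ x₂ y l = -(l * (l ^ 2 - x₁ - x₂ - x₁) + y) := by
  simp only [WeierstrassCurve.Affine.addY, WeierstrassCurve.Affine.negAddY, Ew_addX, Ew_negY]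

variable [DecidableEq F]

lemma Ew_slope (x₁ x₂ y₁ y₂ : F) : (Ew a).slope x₁ x₂ y₁ y₂ =
    if x₁ = x₂ then if y₁ = -y₂ then 0 else 3 * x₁ ^ 2 / (2 * y₁) else (y₁ - y₂) / (x₁ - x₂) := by
  rw [WeierstrassCurve.Affine.slope, Ew_negY, Ew_negY]
  simp [Ew, two_mul]

/-- Data of a chord or tangent addition. -/
structure AddData (a x₁ y₁ x₂ y₂ x₃ y₃ m : F) : Prop where
  e₁ : y₁ ^ 2 = x₁ ^ 3 + a
  e₂ : y₂ ^ 2 = x₂ ^ 3 + a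
  e₃ : y₃ ^ 2 = x₃ ^ 3 + a
  hx : x₃ = m ^ 2 - x₁ - x₂
  hy : y₃ = -(m * (x₃ - x₁) + y₁)
  hl : y₂ = y₁ + m * (x₂ - x₁)
  s2 : x₁ * x₂ + x₁ * x₃ + x₂ * x₃ = - 2 * m * (y₁ - m * x₁)
  s3 : x₁ * x₂ * x₃ = (y₁ - m * x₁) ^ 2 - a
  cs : x₁ ≠ x₂ ∨ (x₁ = x₂ ∧ y₁ = y₂ ∧ 2 * y₁ * m = 3 * x₁ ^ 2 ∧ y₁ ≠ 0)

lemma Ew_add_cases (P Q : (Ew a).Point) : P = 0 ∨ Q = 0 ∨ Q = -P ∨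
    ∃ x₁ y₁ h₁ x₂ y₂ h₂ m x₃ y₃ h₃, P = Point.some x₁ y₁ h₁ ∧ Q = Point.some x₂ y₂ h₂ ∧
      P + Q = Point.some x₃ y₃ h₃ ∧ AddData a x₁ y₁ x₂ y₂ x₃ y₃ m := by
  rcases P with _ | ⟨x₁, y₁, h₁⟩
  · left; rfl
  rcases Q with _ | ⟨x₂, y₂, h₂⟩
  · right; left; rfl
  right; right
  by_cases hxy : x₁ = x₂ ∧ y₁ = (Ew a).negY x₂ y₂
  · left
    rw [Ew_negY] at hxy
    obtain ⟨rfl, rfl⟩ := hxy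
    rw [Point.neg_some]
    simp only [Ew_negY, neg_neg]
  right
  have hadd := Point.add_some hxy (h₁ := h₁) (h₂ := h₂)
  refine ⟨x₁, y₁, h₁, x₂, y₂, h₂, (Ew a).slope x₁ x₂ y₁ y₂, _, _, _, rfl, rfl, hadd, ?_⟩
  have e₁ := Ew_eq h₁
  have e₂ := Ew_eq h₂
  have e₃ := Ew_eq (WeierstrassCurve.Affine.nonsingular_add h₁ h₂ hxy)
  rw [Ew_negY] at hxy
  set m := (Ew a).slope x₁ x₂ y₁ y₂ with hm
  rw [Ew_slope] at hm
  rw [Ew_addX, Ew_addY] at e₃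
  rw [Ew_addX, Ew_addY]
  by_cases hx : x₁ = x₂
  · subst hx
    have hyy : y₁ ≠ -y₂ := fun h => hxy ⟨rfl, h⟩
    have : (y₁ - y₂) * (y₁ + y₂) = 0 := by linear_combination e₁ - e₂
    have hy12 : y₁ = y₂ := by
      rcases mul_eq_zero.1 this with h | h
      · exact sub_eq_zero.1 h
      · exact absurd (eq_neg_of_add_eq_zero_left h) hyy
    subst hy12
    have hy0 : y₁ ≠ 0 := by
      rintro rfl; simp at hyy
    rw [if_pos rfl, if_neg hyy] at hm
    have hm' : 2 * y₁ * m = 3 * x₁ ^ 2 := by rw [hm]; field_simp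
    refine ⟨e₁, e₂, e₃, rfl, rfl, by ring, ?_, ?_, Or.inr ⟨rfl, rfl, hm', hy0⟩⟩
    · linear_combination hm'
    · linear_combination x₁ * hm' - e₁
  · rw [if_neg hx] at hm
    have hx' : x₁ - x₂ ≠ 0 := sub_ne_zero.2 hx
    have hm' : m * (x₁ - x₂) = y₁ - y₂ := by rw [hm]; field_simp
    have s2 : x₁ * x₂ + x₁ * (m ^ 2 - x₁ - x₂) + x₂ * (m ^ 2 - x₁ - x₂)
        = - 2 * m * (y₁ - m * x₁) := by
      have : (x₁ - x₂) * (x₁ * x₂ + x₁ * (m ^ 2 - x₁ - x₂) + x₂ * (m ^ 2 - x₁ - x₂)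
         + 2 * m * (y₁ - m * x₁)) = 0 := by
        have hy2 : y₂ = y₁ - m * (x₁ - x₂) := by linear_combination hm'
        rw [hy2] at e₂
        linear_combination e₁ - e₂
      have := (mul_eq_zero.1 this).resolve_left hx'
      linear_combination this
    refine ⟨e₁, e₂, e₃, rfl, rfl, by linear_combination hm', s2, ?_, Or.inl hx⟩
    linear_combination x₁ * s2 - e₁
end basic

section scale
variable {F K : Type*} [Field F] [CharZero F] [Field K] [CharZero K] [DecidableEq F] [DecidableEq K]
  {a : F} {b : K}

/-- The underlying map of `sc`. -/
noncomputable def scFun (f : F →+* K) (u : K) (hb0 : b ≠ 0) (hb : b = u ^ 6 * f a) :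
    (Ew a).Point → (Ew b).Point
  | .zero => .zero
  | .some x y h => .some (u ^ 2 * f x) (u ^ 3 * f y) ((Ew_nonsing hb0 _ _).2 (by
        have := congrArg f (Ew_eq h)
        simp only [map_pow, map_add] at this
        rw [hb]; linear_combination u ^ 6 * this))

lemma scFun_add (f : F →+* K) (u : K) (hu : u ≠ 0) (hb0 : b ≠ 0) (hb : b = u ^ 6 * f a)
    (P Q : (Ew a).Point) : scFun f u hb0 hb (P + Q) = scFun f u hb0 hb P + scFun f u hb0 hb Q := by
    rcases P with _ | ⟨x₁, y₁, h₁⟩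
    · have h0 : scFun f u hb0 hb Point.zero = 0 := rfl
      rw [h0, ← Point.zero_def, zero_add, zero_add]
    rcases Q with _ | ⟨x₂, y₂, h₂⟩
    · have h0 : scFun f u hb0 hb Point.zero = 0 := rfl
      rw [h0, ← Point.zero_def, add_zero, add_zero]
    have inj2 : ∀ x y : F, u ^ 2 * f x = u ^ 2 * f y ↔ x = y := fun x y => by
      rw [mul_right_inj' (pow_ne_zero _ hu)]; exact f.injective.eq_iff
    have inj3 : ∀ x y : F, u ^ 3 * f x = -(u ^ 3 * f y) ↔ x = -y := fun x y => by
      rw [← mul_neg, mul_right_inj' (pow_ne_zero _ hu), ← map_neg]; exact f.injective.eq_iff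
    by_cases hxy : x₁ = x₂ ∧ y₁ = (Ew a).negY x₂ y₂
    · have hxy' := hxy
      rw [Ew_negY] at hxy'
      rw [Point.add_of_Y_eq hxy.1 hxy.2, scFun, scFun, Point.add_of_Y_eq ((inj2 _ _).2 hxy.1)
        (by rw [Ew_negY]; exact (inj3 _ _).2 hxy'.2)]
      rfl
    · have hxy' : ¬ (u ^ 2 * f x₁ = u ^ 2 * f x₂ ∧ u ^ 3 * f y₁ = (Ew b).negY (u ^ 2 * f x₂) (u ^ 3 * f y₂)) := by
        rw [Ew_negY, inj2, inj3]; rwa [Ew_negY] at hxy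
      rw [Point.add_some hxy, scFun, scFun, scFun, Point.add_some hxy']
      have hs : (Ew b).slope (u ^ 2 * f x₁) (u ^ 2 * f x₂) (u ^ 3 * f y₁) (u ^ 3 * f y₂) =
          u * f ((Ew a).slope x₁ x₂ y₁ y₂) := by
        rw [Ew_slope, Ew_slope]
        simp only [inj2, inj3]
        split_ifs with h1 h2
        · simp
        · simp only [map_div₀, map_mul, map_pow, map_ofNat]
          by_cases hy : f y₁ = 0
          · simp [hy]
          · field_simp
        · simp only [map_div₀, map_sub]
          have : f x₁ - f x₂ ≠ 0 := by
            rw [sub_ne_zero]; exact fun h => h1 (f.injective h)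
          rw [← mul_sub, ← mul_sub]
          field_simp
      simp only [hs, Ew_addX, Ew_addY, Point.some.injEq, map_sub, map_add, map_neg, map_mul, map_pow]
      constructor <;> ring

/-- `(x,y) ↦ (u² f x, u³ f y)` from `E_a` to `E_{u⁶ f a}`. -/
noncomputable def sc (f : F →+* K) (u : K) (hu : u ≠ 0) (hb0 : b ≠ 0) (hb : b = u ^ 6 * f a) :
    (Ew a).Point →+ (Ew b).Point where
  toFun := scFun f u hb0 hb
  map_zero' := rfl
  map_add' := scFun_add f u hu hb0 hb

lemma sc_some (f : F →+* K) (u : K) (hu : u ≠ 0) (hb0 : b ≠ 0) (hb : b = u ^ 6 * f a)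
    (x y : F) (h : (Ew a).Nonsingular x y) : ∃ h', sc f u hu hb0 hb (.some x y h) =
      .some (u ^ 2 * f x) (u ^ 3 * f y) h' := ⟨_, rfl⟩

lemma sc_injective (f : F →+* K) (u : K) (hu : u ≠ 0) (hb0 : b ≠ 0) (hb : b = u ^ 6 * f a) :
    Function.Injective (sc f u hu hb0 hb) := by
  rw [injective_iff_map_eq_zero]
  rintro (_ | ⟨x, y, h⟩) h0
  · rfl
  · exact absurd h0 (Point.some_ne_zero _)
end scale

open WeierstrassCurve.Affine
set_option linter.unusedSimpArgs false
set_option linter.style.longLine false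

section isog

lemma exists_theta : ∃ θ : ℂ, θ ^ 2 = -3 := by
  obtain ⟨z, hz⟩ := IsAlgClosed.exists_pow_nat_eq (-3 : ℂ) (n := 2) (by norm_num)
  exact ⟨z, hz⟩

/-- A square root of `-3`. -/
noncomputable def thet : ℂ := exists_theta.choose
lemma thet_sq : thet ^ 2 = -3 := exists_theta.choose_spec
lemma thet_ne : thet ≠ 0 := by
  intro h; have := thet_sq; rw [h] at this; norm_num at this

/-- A primitive cube root of unity. -/
noncomputable def om : ℂ := (-1 + thet) / 2
lemma om_eq : om ^ 2 + om + 1 = 0 := by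
  unfold om; linear_combination thet_sq / 4
lemma om_ne : om ≠ 0 := by
  intro h; have := om_eq; rw [h] at this; norm_num at this
lemma om_cube : om ^ 3 = 1 := by linear_combination (om - 1) * om_eq
lemma thet_om : thet = om - om ^ 2 := by
  have : thet = 2 * om + 1 := by unfold om; ring
  linear_combination this + om_eq
lemma om_ne_one : om ≠ 1 := by
  intro h; have := om_eq; rw [h] at this; norm_num at this

variable {a : ℂ}

noncomputable instance : DecidableEq ℂ := Classical.decEq ℂ

/-- Multiplication by `ω`. -/
noncomputable def Tm (ha : a ≠ 0) : (Ew a).Point →+ (Ew a).Point :=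
  sc (RingHom.id ℂ) (om ^ 2) (pow_ne_zero _ om_ne) ha
    (by rw [RingHom.id_apply]; linear_combination (-a) * (om ^ 9 + om ^ 6 + om ^ 3 + 1) * om_cube)

lemma Tm_some (ha : a ≠ 0) (x y : ℂ) (h : (Ew a).Nonsingular x y) (h' : (Ew a).Nonsingular (om * x) y) :
    Tm ha (.some x y h) = .some (om * x) y h' := by
  obtain ⟨h'', e⟩ := sc_some (RingHom.id ℂ) (om ^ 2) (pow_ne_zero _ om_ne) ha
    (by rw [RingHom.id_apply]; linear_combination (-a) * (om ^ 9 + om ^ 6 + om ^ 3 + 1) * om_cube) x y h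
  refine e.trans ?_
  simp only [Point.some.injEq, RingHom.id_apply]
  constructor
  · linear_combination om * x * om_cube
  · linear_combination y * (om ^ 3 + 1) * om_cube

lemma nonsing_om (ha : a ≠ 0) {x y : ℂ} (h : (Ew a).Nonsingular x y) :
    (Ew a).Nonsingular (om * x) y :=
  (Ew_nonsing ha _ _).2 (by rw [Ew_eq h]; linear_combination (-x ^ 3) * om_cube)

lemma Tm_sum (ha : a ≠ 0) (P : (Ew a).Point) : P + Tm ha P + Tm ha (Tm ha P) = 0 := by
  rcases P with _ | ⟨x, y, h⟩
  · rw [← Point.zero_def]; simp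
  have h1 := nonsing_om ha h
  have h2 := nonsing_om ha h1
  rw [Tm_some ha x y h h1, Tm_some ha _ y h1 h2]
  rcases Ew_add_cases (Point.some x y h) (Point.some _ y h1) with h0 | h0 | h0 | h0
  · exact absurd h0 (Point.some_ne_zero _)
  · exact absurd h0 (Point.some_ne_zero _)
  · rw [Point.neg_some, Point.some.injEq, Ew_negY] at h0
    have hy : y = 0 := by linear_combination h0.2 / 2
    have hx : x = 0 := by
      have : (om - 1) * x = 0 := by linear_combination h0.1
      exact (mul_eq_zero.1 this).resolve_left (sub_ne_zero.2 om_ne_one)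
    have := Ew_eq h
    rw [hx, hy] at this
    exact absurd (by linear_combination -this) ha
  · obtain ⟨x₁, y₁, g₁, x₂, y₂, g₂, m, x₃, y₃, g₃, e1, e2, e3, D⟩ := h0
    rw [Point.some.injEq] at e1 e2
    obtain ⟨rfl, rfl⟩ := e1
    obtain ⟨rfl, rfl⟩ := e2
    have hm : m = 0 := by
      rcases D.cs with hc | ⟨hc, -, hm, hy⟩
      · have := D.hl
        have : m * (om * x - x) = 0 := by linear_combination -this
        exact (mul_eq_zero.1 this).resolve_right (sub_ne_zero.2 (Ne.symm hc))
      · have : (om - 1) * x = 0 := by linear_combination -hc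
        have := (mul_eq_zero.1 this).resolve_left (sub_ne_zero.2 om_ne_one)
        rw [this] at hm
        have : y * m = 0 := by linear_combination hm / 2
        exact (mul_eq_zero.1 this).resolve_left hy
    rw [e3, ← sub_neg_eq_add, sub_eq_zero, Point.neg_some, Point.some.injEq, Ew_negY]
    have hx := D.hx
    have hy := D.hy
    rw [hm] at hx hy
    constructor
    · rw [hx]; linear_combination -x * om_eq
    · rw [hy]; ring

/-- The endomorphism `√-3`. -/
noncomputable def psi (ha : a ≠ 0) : (Ew a).Point →+ (Ew a).Point := Tm ha - (Tm ha).comp (Tm ha)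

lemma psi_psi (ha : a ≠ 0) (P : (Ew a).Point) : psi ha (psi ha P) = -(3 • P) := by
  have h1 := Tm_sum ha P
  have h2 := Tm_sum ha (Tm ha P)
  have h3 := Tm_sum ha (Tm ha (Tm ha P))
  simp only [psi, AddMonoidHom.sub_apply, AddMonoidHom.comp_apply, map_sub]
  generalize Tm ha P = P1 at *
  generalize Tm ha P1 = P2 at *
  generalize Tm ha P2 = P3 at *
  generalize Tm ha P3 = P4 at *
  have e2 : P2 = -P - P1 := by rw [← sub_eq_zero, ← h1]; abel
  subst e2
  have e3 : P3 = P := by rw [← sub_eq_zero, ← h2]; abel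
  subst e3
  have e4 : P4 = P1 := by rw [← sub_eq_zero, ← h3]; abel
  subst e4
  abel

lemma psi_zero_x (ha : a ≠ 0) (y : ℂ) (h : (Ew a).Nonsingular 0 y) : psi ha (.some 0 y h) = 0 := by
  have h0 : (Ew a).Nonsingular (om * 0) y := by rwa [mul_zero]
  have : Tm ha (.some 0 y h) = .some 0 y h := by
    rw [Tm_some ha 0 y h h0, Point.some.injEq]; simp
  simp only [psi, AddMonoidHom.sub_apply, AddMonoidHom.comp_apply, this, sub_self]

lemma psi_some (ha : a ≠ 0) (x y : ℂ) (hx : x ≠ 0) (h : (Ew a).Nonsingular x y) :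
    ∃ h', psi ha (.some x y h) = .some (-(x ^ 3 + 4 * a) / (3 * x ^ 2))
      (y * (8 * a - x ^ 3) / (3 * thet * x ^ 3)) h' := by
  have h1 := nonsing_om ha h
  have h2 := nonsing_om ha h1
  have E := Ew_eq h
  have key : psi ha (.some x y h) = .some _ _ h1 + (-.some _ _ h2) := by
    simp only [psi, AddMonoidHom.sub_apply, AddMonoidHom.comp_apply]
    rw [Tm_some ha x y h h1, Tm_some ha _ y h1 h2, sub_eq_add_neg]
  have hne : om * x - om * (om * x) ≠ 0 := by
    have : om * x - om * (om * x) = thet * x := by rw [thet_om]; ring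
    rw [this]; exact mul_ne_zero thet_ne hx
  rw [Point.neg_some] at key
  rcases Ew_add_cases (Point.some _ y h1) (Point.some _ _ ((nonsingular_neg ..).2 h2)) with h0 | h0 | h0 | h0
  · exact absurd h0 (Point.some_ne_zero _)
  · exact absurd h0 (Point.some_ne_zero _)
  · rw [Point.neg_some, Point.some.injEq] at h0
    exact absurd (by linear_combination -h0.1) hne
  · obtain ⟨x₁, y₁, g₁, x₂, y₂, g₂, m, x₃, y₃, g₃, e1, e2, e3, D⟩ := h0
    rw [Point.some.injEq] at e1 e2
    rw [Ew_negY] at e2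
    obtain ⟨rfl, rfl⟩ := e1
    obtain ⟨rfl, rfl⟩ := e2
    rw [e3] at key
    have t0 := thet_ne
    have hm : m = 2 * y / (thet * x) := by
      rw [eq_div_iff (mul_ne_zero t0 hx), thet_om]
      linear_combination D.hl
    have hx3 : x₃ = -(x ^ 3 + 4 * a) / (3 * x ^ 2) := by
      rw [D.hx, hm, eq_div_iff (by simp [hx]), div_pow, mul_pow, mul_pow, thet_sq]
      field_simp
      linear_combination -4 * E - 3 * x ^ 3 * om_eq
    have hy3 : y₃ = y * (8 * a - x ^ 3) / (3 * thet * x ^ 3) := by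
      rw [D.hy, hx3, hm]
      have : om = (-1 + thet) / 2 := rfl
      rw [this]
      field_simp
      ring
    subst hx3 hy3
    exact ⟨g₃, key⟩
end isog

section phi
variable {a : ℚ}

lemma castC_ne (ha : a ≠ 0) : (a : ℂ) ≠ 0 := by exact_mod_cast ha

/-- Base change to `ℂ`. -/
noncomputable def iot (ha : a ≠ 0) : (Ew a).Point →+ (Ew (a : ℂ)).Point :=
  sc (Rat.castHom ℂ) 1 one_ne_zero (castC_ne ha) (by simp)

/-- The twisted base change to `ℂ`. -/
noncomputable def iot' (ha : a ≠ 0) : (Ew (-27 * a)).Point →+ (Ew (a : ℂ)).Point :=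
  sc (Rat.castHom ℂ) (thet⁻¹) (inv_ne_zero thet_ne) (castC_ne ha) (by
    have : thet ^ 6 = -27 := by
      calc thet ^ 6 = (thet ^ 2) ^ 3 := by ring
        _ = -27 := by rw [thet_sq]; norm_num
    rw [inv_pow, this]; simp)

lemma iot_some (ha : a ≠ 0) (x y : ℚ) (h : (Ew a).Nonsingular x y) :
    ∃ h', iot ha (.some x y h) = .some (x : ℂ) (y : ℂ) h' := by
  obtain ⟨h', e⟩ := sc_some (Rat.castHom ℂ) 1 one_ne_zero (castC_ne ha) (by simp) x y h
  have hx : (1 : ℂ) ^ 2 * (Rat.castHom ℂ) x = (x : ℂ) := by simp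
  have hy : (1 : ℂ) ^ 3 * (Rat.castHom ℂ) y = (y : ℂ) := by simp
  have h'' := h'
  rw [hx, hy] at h''
  refine ⟨h'', e.trans ?_⟩
  rw [Point.some.injEq]; exact ⟨hx, hy⟩

lemma iot'_some (ha : a ≠ 0) (x y : ℚ) (h : (Ew (-27 * a)).Nonsingular x y) :
    ∃ h', iot' ha (.some x y h) = .some (-(x : ℂ) / 3) (-(y : ℂ) / (3 * thet)) h' := by
  have t0 := thet_ne
  obtain ⟨h', e⟩ := sc_some (Rat.castHom ℂ) (thet⁻¹) (inv_ne_zero thet_ne) (castC_ne ha) (by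
    have : thet ^ 6 = -27 := by
      calc thet ^ 6 = (thet ^ 2) ^ 3 := by ring
        _ = -27 := by rw [thet_sq]; norm_num
    rw [inv_pow, this]; simp) x y h
  have hx : (thet⁻¹ : ℂ) ^ 2 * (Rat.castHom ℂ) x = -(x : ℂ) / 3 := by
    rw [inv_pow, thet_sq]; simp; ring
  have hy : (thet⁻¹ : ℂ) ^ 3 * (Rat.castHom ℂ) y = -(y : ℂ) / (3 * thet) := by
    rw [inv_pow, show thet ^ 3 = thet ^ 2 * thet by ring, thet_sq]; simp; field_simp
  have h'' := h'
  rw [hx, hy] at h''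
  refine ⟨h'', e.trans ?_⟩
  rw [Point.some.injEq]; exact ⟨hx, hy⟩

lemma phi_nonsing (ha : a ≠ 0) {x y : ℚ} (hx : x ≠ 0) (h : (Ew a).Nonsingular x y) :
    (Ew (-27 * a)).Nonsingular ((x ^ 3 + 4 * a) / x ^ 2) (y * (x ^ 3 - 8 * a) / x ^ 3) := by
  rw [Ew_nonsing (mul_ne_zero (by norm_num) ha), div_pow, mul_pow, Ew_eq h]
  field_simp
  ring

lemma psi_iot_some (ha : a ≠ 0) (x y : ℚ) (hx : x ≠ 0) (h : (Ew a).Nonsingular x y) :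
    psi (castC_ne ha) (iot ha (.some x y h)) = iot' ha (.some _ _ (phi_nonsing ha hx h)) := by
  obtain ⟨h1, e1⟩ := iot_some ha x y h
  obtain ⟨h2, e2⟩ := iot'_some ha _ _ (phi_nonsing ha hx h)
  have hxc : (x : ℂ) ≠ 0 := by exact_mod_cast hx
  obtain ⟨h3, e3⟩ := psi_some (castC_ne ha) (x : ℂ) y hxc h1
  have t0 := thet_ne
  rw [e1, e2, e3, Point.some.injEq]
  constructor
  · push_cast; field_simp
  · push_cast; field_simp; ring

lemma phi_exists (ha : a ≠ 0) (P : (Ew a).Point) :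
    ∃ Q, iot' ha Q = psi (castC_ne ha) (iot ha P) := by
  rcases P with _ | ⟨x, y, h⟩
  · refine ⟨0, ?_⟩; rw [← Point.zero_def]; simp
  by_cases hx : x = 0
  · subst hx
    refine ⟨0, ?_⟩
    obtain ⟨h1, e1⟩ := iot_some ha 0 y h
    have e2 : (Point.some ((0 : ℚ) : ℂ) (y : ℂ) h1 : (Ew (a : ℂ)).Point)
        = .some 0 (y : ℂ) (by simpa using h1) := by
      rw [Point.some.injEq]; simp
    rw [e1, e2, psi_zero_x, map_zero]
  · exact ⟨_, (psi_iot_some ha x y hx h).symm⟩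

lemma iot'_inj (ha : a ≠ 0) : Function.Injective (iot' ha) := sc_injective _ _ _ _ _
lemma iot_inj (ha : a ≠ 0) : Function.Injective (iot ha) := sc_injective _ _ _ _ _

/-- The 3-isogeny `E_a → E_{-27a}`. -/
noncomputable def phi (ha : a ≠ 0) : (Ew a).Point →+ (Ew (-27 * a)).Point :=
  AddMonoidHom.mk' (fun P => (phi_exists ha P).choose) (fun P Q => iot'_inj ha (by
    refine (phi_exists ha (P + Q)).choose_spec.trans ?_
    rw [(iot' ha).map_add, (phi_exists ha P).choose_spec, (phi_exists ha Q).choose_spec,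
      ← map_add, ← map_add]))

lemma phi_spec (ha : a ≠ 0) (P : (Ew a).Point) : iot' ha (phi ha P) = psi (castC_ne ha) (iot ha P) :=
  (phi_exists ha P).choose_spec

lemma phi_some (ha : a ≠ 0) (x y : ℚ) (hx : x ≠ 0) (h : (Ew a).Nonsingular x y) :
    phi ha (.some x y h) = .some _ _ (phi_nonsing ha hx h) :=
  iot'_inj ha (by rw [phi_spec, psi_iot_some ha x y hx])

/-- Scaling `E_{729 a} → E_a`. -/
noncomputable def sg (ha : a ≠ 0) : (Ew (-27 * (-27 * a))).Point →+ (Ew a).Point :=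
  sc (RingHom.id ℚ) (1 / 3) (by norm_num) ha (by rw [RingHom.id_apply]; ring)

lemma sg_inj (ha : a ≠ 0) : Function.Injective (sg ha) := sc_injective _ _ _ _ _

lemma m27 (ha : a ≠ 0) : -27 * a ≠ 0 := mul_ne_zero (by norm_num) ha


lemma castC_m27 (ha : a ≠ 0) : (((-27 * a : ℚ)) : ℂ) ≠ 0 := castC_ne (m27 ha)

/-- The twisting isomorphism over `ℂ`. -/
noncomputable def kap (ha : a ≠ 0) : (Ew (((-27 * a : ℚ)) : ℂ)).Point →+ (Ew (a : ℂ)).Point :=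
  sc (RingHom.id ℂ) (thet⁻¹) (inv_ne_zero thet_ne) (castC_ne ha) (by
    have : thet ^ 6 = -27 := by
      calc thet ^ 6 = (thet ^ 2) ^ 3 := by ring
        _ = -27 := by rw [thet_sq]; norm_num
    rw [inv_pow, this, RingHom.id_apply]; push_cast; ring)

lemma kap_some (ha : a ≠ 0) (x y : ℂ) (h : (Ew (((-27 * a : ℚ)) : ℂ)).Nonsingular x y) :
    ∃ h', kap ha (.some x y h) = .some (-x / 3) (-y / (3 * thet)) h' := by
  have t0 := thet_ne
  obtain ⟨h', e⟩ := sc_some (RingHom.id ℂ) (thet⁻¹) (inv_ne_zero thet_ne) (castC_ne ha) (by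
    have : thet ^ 6 = -27 := by
      calc thet ^ 6 = (thet ^ 2) ^ 3 := by ring
        _ = -27 := by rw [thet_sq]; norm_num
    rw [inv_pow, this, RingHom.id_apply]; push_cast; ring) x y h
  have hx : (thet⁻¹ : ℂ) ^ 2 * (RingHom.id ℂ) x = -x / 3 := by
    rw [inv_pow, thet_sq, RingHom.id_apply]; ring
  have hy : (thet⁻¹ : ℂ) ^ 3 * (RingHom.id ℂ) y = -y / (3 * thet) := by
    rw [inv_pow, show thet ^ 3 = thet ^ 2 * thet by ring, thet_sq, RingHom.id_apply]; field_simp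
  have h'' := h'
  rw [hx, hy] at h''
  refine ⟨h'', e.trans ?_⟩
  rw [Point.some.injEq]; exact ⟨hx, hy⟩

lemma kap_iot (ha : a ≠ 0) (P : (Ew (-27 * a)).Point) : kap ha (iot (m27 ha) P) = iot' ha P := by
  rcases P with _ | ⟨x, y, h⟩
  · rfl
  · obtain ⟨h1, e1⟩ := iot_some (m27 ha) x y h
    obtain ⟨h2, e2⟩ := kap_some ha _ _ h1
    obtain ⟨h3, e3⟩ := iot'_some ha x y h
    rw [e1, e2, e3]

lemma kap_Tm (ha : a ≠ 0) (P : (Ew (((-27 * a : ℚ)) : ℂ)).Point) :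
    kap ha (Tm (castC_m27 ha) P) = Tm (castC_ne ha) (kap ha P) := by
  rcases P with _ | ⟨x, y, h⟩
  · rfl
  · have h1 := nonsing_om (castC_m27 ha) h
    obtain ⟨h2, e2⟩ := kap_some ha _ _ h1
    obtain ⟨h3, e3⟩ := kap_some ha _ _ h
    have h4 := nonsing_om (castC_ne ha) h3
    rw [Tm_some _ _ _ h h1, e2, e3, Tm_some _ _ _ h3 h4, Point.some.injEq]
    constructor <;> ring

lemma kap_psi (ha : a ≠ 0) (P : (Ew (((-27 * a : ℚ)) : ℂ)).Point) :
    kap ha (psi (castC_m27 ha) P) = psi (castC_ne ha) (kap ha P) := by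
  simp only [psi, AddMonoidHom.sub_apply, AddMonoidHom.comp_apply, map_sub, kap_Tm]

lemma kap_iot' (ha : a ≠ 0) (P : (Ew (-27 * (-27 * a))).Point) :
    kap ha (iot' (m27 ha) P) = - iot ha (sg ha P) := by
  rcases P with _ | ⟨x, y, h⟩
  · have : (Point.zero : (Ew (-27 * (-27 * a))).Point) = 0 := rfl
    rw [this, map_zero, map_zero, map_zero, map_zero, neg_zero]
  · obtain ⟨h1, e1⟩ := iot'_some (m27 ha) x y h
    obtain ⟨h2, e2⟩ := kap_some ha _ _ h1
    obtain ⟨h3, e3⟩ : ∃ h', sg ha (.some x y h) = .some ((1 / 3) ^ 2 * x) ((1 / 3) ^ 3 * y) h' :=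
      sc_some (RingHom.id ℚ) (1 / 3) (by norm_num) ha (by rw [RingHom.id_apply]; ring) x y h
    obtain ⟨h4, e4⟩ := iot_some ha _ _ h3
    have t0 := thet_ne
    rw [e1, e2, e3, e4, Point.neg_some, Point.some.injEq, Ew_negY]
    push_cast
    constructor
    · ring
    · rw [div_eq_iff (mul_ne_zero (by norm_num) t0)]
      field_simp
      linear_combination y * thet_sq

lemma sg_phi_phi (ha : a ≠ 0) (P : (Ew a).Point) :
    sg ha (phi (m27 ha) (phi ha P)) = 3 • P := by
  apply iot_inj ha
  have h1 := kap_iot' ha (phi (m27 ha) (phi ha P))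
  rw [phi_spec, kap_psi, kap_iot, phi_spec, psi_psi] at h1
  rw [map_nsmul]
  exact neg_injective h1.symm

lemma sg_surj (ha : a ≠ 0) : Function.Surjective (sg ha) := by
  rintro (_ | ⟨x, y, h⟩)
  · exact ⟨0, map_zero _⟩
  · have h1 : (Ew (-27 * (-27 * a))).Nonsingular (9 * x) (27 * y) := by
      rw [Ew_nonsing (m27 (m27 ha))]; linear_combination 729 * Ew_eq h
    obtain ⟨h3, e3⟩ : ∃ h', sg ha (.some _ _ h1) = .some ((1 / 3) ^ 2 * (9 * x)) ((1 / 3) ^ 3 * (27 * y)) h' :=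
      sc_some (RingHom.id ℚ) (1 / 3) (by norm_num) ha (by rw [RingHom.id_apply]; ring) _ _ h1
    refine ⟨_, e3.trans ?_⟩
    rw [Point.some.injEq]
    constructor <;> ring

lemma index_three (ha : a ≠ 0) (h1 : (phi ha).range.index ≠ 0) (h2 : (phi (m27 ha)).range.index ≠ 0) :
    (nsmulAddMonoidHom 3 : (Ew a).Point →+ (Ew a).Point).range.index ≠ 0 ∧
    (nsmulAddMonoidHom 3 : (Ew a).Point →+ (Ew a).Point).range.index ≤
      (phi ha).range.index * (phi (m27 ha)).range.index := by
  have e : (nsmulAddMonoidHom 3 : (Ew a).Point →+ (Ew a).Point).range =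
      (((phi ha).range).map (phi (m27 ha))).map (sg ha) := by
    ext P
    simp only [AddMonoidHom.mem_range, AddSubgroup.mem_map, nsmulAddMonoidHom_apply]
    constructor
    · rintro ⟨Q, rfl⟩
      exact ⟨_, ⟨_, ⟨Q, rfl⟩, rfl⟩, sg_phi_phi ha Q⟩
    · rintro ⟨_, ⟨_, ⟨Q, rfl⟩, rfl⟩, rfl⟩
      exact ⟨Q, (sg_phi_phi ha Q).symm⟩
  rw [e, AddSubgroup.index_map_of_bijective ⟨sg_inj ha, sg_surj ha⟩, AddSubgroup.index_map]
  have hd : ((phi ha).range ⊔ (phi (m27 ha)).ker).index ∣ (phi ha).range.index :=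
    AddSubgroup.index_dvd_of_le le_sup_left
  refine ⟨mul_ne_zero (fun h0 => h1 ?_) h2, Nat.mul_le_mul_right _ (Nat.le_of_dvd (Nat.pos_of_ne_zero h1) hd)⟩
  rw [h0] at hd
  exact Nat.eq_zero_of_zero_dvd hd
end phi

open WeierstrassCurve.Affine
set_option linter.unusedSimpArgs false
set_option linter.style.longLine false

section cubicforms
variable {R : Type*} [CommRing R]
/-- The cubic form. -/
def cF (p q r s x y : R) : R := p * x ^ 3 + 3 * q * x ^ 2 * y + 3 * r * x * y ^ 2 + s * y ^ 3
/-- The sextic covariant. -/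
def cG (p q r s x y : R) : R :=
  (q * x ^ 2 + 2 * r * x * y + s * y ^ 2) * (2 * (q ^ 2 - p * r) * x + (q * r - p * s) * y) -
  (p * x ^ 2 + 2 * q * x * y + r * y ^ 2) * ((q * r - p * s) * x + 2 * (r ^ 2 - q * s) * y)
/-- The discriminant. -/
def cD (p q r s : R) : R := (q * r - p * s) ^ 2 - 4 * (q ^ 2 - p * r) * (r ^ 2 - q * s)

/-- Twice the polarized Hessian. -/
def cH2 (p q r s x y z w : R) : R :=
  2 * (q ^ 2 - p * r) * x * z + (q * r - p * s) * (x * w + y * z) + 2 * (r ^ 2 - q * s) * y * w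

lemma cubic_id (p q r s x y z w : R) :
    2 * (cG p q r s x y * cG p q r s z w - cD p q r s * cF p q r s x y * cF p q r s z w) =
      cH2 p q r s x y z w ^ 3 + 3 * cH2 p q r s x y z w * cD p q r s * (x * w - y * z) ^ 2 := by
  unfold cG cD cF cH2; ring

lemma cubic_id2 (p q r s x y z w : R) :
    2 * (cF p q r s x y * cG p q r s z w - cG p q r s x y * cF p q r s z w) =
      -(3 * cH2 p q r s x y z w ^ 2 * (x * w - y * z) + cD p q r s * (x * w - y * z) ^ 3) := by
  unfold cG cD cF cH2; ring
end cubicforms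

section descent
variable {b : ℚ}

/-- The quadratic algebra `ℚ(√b)`. -/
abbrev Kq (b : ℚ) := QuadraticAlgebra ℚ b 0

lemma Kq_mul (u v u' v' : ℚ) : (⟨u, v⟩ * ⟨u', v'⟩ : Kq b) = ⟨u * u' + b * v * v', u * v' + v * u'⟩ := by
  ext <;> simp

lemma Kq_cube (u v : ℚ) : ((⟨u, v⟩ : Kq b) ^ 3) = ⟨u ^ 3 + 3 * b * u * v ^ 2, 3 * u ^ 2 * v + b * v ^ 3⟩ := by
  rw [pow_succ, pow_two, Kq_mul, Kq_mul]; ext <;> simp <;> ring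

lemma kernel_phi {a : ℚ} (ha : a ≠ 0) (x y : ℚ) (h : (Ew (-27 * a)).Nonsingular x y)
    (w : Kq (-27 * a)) (hw : (⟨y, 1⟩ : Kq (-27 * a)) = w ^ 3) : Point.some x y h ∈ (phi ha).range := by
  obtain ⟨u, v⟩ := w
  rw [Kq_cube, QuadraticAlgebra.mk.injEq] at hw
  obtain ⟨hy, h1⟩ := hw
  have hv : v ≠ 0 := by rintro rfl; norm_num at h1
  have E := Ew_eq h
  have hx : x = u ^ 2 + 27 * a * v ^ 2 := by
    have : x ^ 3 = (u ^ 2 + 27 * a * v ^ 2) ^ 3 := by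
      rw [hy] at E
      linear_combination -E + 27 * a * (3 * u ^ 2 * v + -27 * a * v ^ 3 + 1) * h1
    exact (Odd.strictMono_pow (by decide : Odd 3)).injective this
  have hR : (Ew a).Nonsingular (1 / (3 * v)) (u / (3 * v)) := by
    rw [Ew_nonsing ha]; field_simp; linear_combination -1 * h1
  have hx0 : (1 / (3 * v)) ≠ 0 := by positivity
  refine ⟨_, (phi_some ha _ _ hx0 hR).trans ?_⟩
  rw [Point.some.injEq]
  constructor
  · rw [hx]; field_simp; linear_combination h1
  · rw [hy]; field_simp; linear_combination u * h1

lemma rel_phi {a : ℚ} (ha : a ≠ 0) (hsq : ∀ r : ℚ, r ^ 2 ≠ -27 * a) (x₁ y₁ x₂ y₂ : ℚ)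
    (h₁ : (Ew (-27 * a)).Nonsingular x₁ y₁) (h₂ : (Ew (-27 * a)).Nonsingular x₂ y₂)
    (w : Kq (-27 * a)) (hw : (⟨y₁, 1⟩ * ⟨-y₂, 1⟩ : Kq (-27 * a)) = w ^ 3) :
    Point.some x₁ y₁ h₁ - Point.some x₂ y₂ h₂ ∈ (phi ha).range := by
  have : Fact (∀ r : ℚ, r ^ 2 ≠ -27 * a + 0 * r) := ⟨fun r => by simpa using hsq r⟩
  rw [sub_eq_add_neg, Point.neg_some]
  rcases Ew_add_cases (Point.some x₁ y₁ h₁) (Point.some _ _ ((nonsingular_neg ..).2 h₂)) with h0 | h0 | h0 | h0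
  · exact absurd h0 (Point.some_ne_zero _)
  · exact absurd h0 (Point.some_ne_zero _)
  · rw [h0, add_neg_cancel]; exact zero_mem _
  · obtain ⟨x₁, y₁, g₁, x₂, y₂, g₂, m, x₃, y₃, g₃, e1, e2, e3, D⟩ := h0
    rw [Point.some.injEq] at e1 e2
    rw [Ew_negY] at e2
    obtain ⟨rfl, rfl⟩ := e1
    obtain ⟨rfl, rfl⟩ := e2
    rw [e3, ← neg_mem_iff, Point.neg_some]
    have hw0 : w ≠ 0 := by
      rintro rfl
      rw [zero_pow (by norm_num)] at hw
      rcases mul_eq_zero.1 hw with h | h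
      · simpa using congrArg QuadraticAlgebra.im h
      · simpa using congrArg QuadraticAlgebra.im h
    have key : w ^ 3 * (⟨-y₃, 1⟩ : Kq (-27 * a)) = (⟨y₁ - m * x₁, 1⟩ : Kq (-27 * a)) ^ 3 := by
      rw [← hw, Kq_mul, Kq_mul, Kq_cube, QuadraticAlgebra.mk.injEq]
      have hx := D.hx
      have hy := D.hy
      have hl := D.hl
      have s2 := D.s2
      have s3 := D.s3
      constructor
      · rw [hl, hy]
        linear_combination m ^ 3 * s3 + m ^ 2 * (y₁ - m * x₁) * s2 + m * ((y₁ - m * x₁) ^ 2 + -27 * a) * hx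
      · rw [hl, hy]
        linear_combination m ^ 2 * s2 + 2 * m * (y₁ - m * x₁) * hx
    refine kernel_phi ha _ _ _ (⟨y₁ - m * x₁, 1⟩ / w) ?_
    rw [Ew_negY, div_pow, ← key, mul_div_cancel_left₀ _ (pow_ne_zero _ hw0)]


/-- The form `F` represents the point with ordinate `y`. -/
def RepF (p q r s : ℤ) (y : ℚ) : Prop := ∃ x z : ℤ, ∃ T : ℚ, T ≠ 0 ∧ (cF p q r s x z : ℤ) = T ^ 3 ∧
  (cG p q r s x z : ℤ) = 2 * y * T ^ 3

lemma cast_cF (p q r s x z : ℤ) : ((cF p q r s x z : ℤ) : ℚ) = cF (p : ℚ) q r s x z := by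
  unfold cF; push_cast; ring
lemma cast_cG (p q r s x z : ℤ) : ((cG p q r s x z : ℤ) : ℚ) = cG (p : ℚ) q r s x z := by
  unfold cG; push_cast; ring
lemma cast_cD (p q r s : ℤ) : ((cD p q r s : ℤ) : ℚ) = cD (p : ℚ) q r s := by
  unfold cD; push_cast; ring

lemma rep_cube (p q r s x z x' z' : ℤ) (y y' T T' : ℚ) (hD : (cD p q r s : ℤ) = 4 * b)
    (hT : T ≠ 0) (hT' : T' ≠ 0)
    (h1 : (cF p q r s x z : ℤ) = T ^ 3) (h2 : (cG p q r s x z : ℤ) = 2 * y * T ^ 3)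
    (h1' : (cF p q r s x' z' : ℤ) = T' ^ 3) (h2' : (cG p q r s x' z' : ℤ) = 2 * y' * T' ^ 3) :
    ∃ w : Kq b, (⟨y, 1⟩ * ⟨-y', 1⟩ : Kq b) = w ^ 3 := by
  have i1 := cubic_id (p : ℚ) q r s x z x' z'
  have i2 := cubic_id2 (p : ℚ) q r s x z x' z'
  rw [← cast_cF, ← cast_cF, ← cast_cG, ← cast_cG, h1, h2, h1', h2', ← cast_cD, hD] at i1
  rw [← cast_cF, ← cast_cF, ← cast_cG, ← cast_cG, h1, h2, h1', h2', ← cast_cD, hD] at i2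
  generalize cH2 (p : ℚ) q r s x z x' z' = h at i1 i2
  generalize ((x : ℚ) * z' - z * x') = d at i1 i2
  refine ⟨⟨-h / (2 * T * T'), d / (T * T')⟩, ?_⟩
  rw [Kq_mul, Kq_cube, QuadraticAlgebra.mk.injEq]
  constructor
  · field_simp
    linear_combination -i1
  · field_simp
    linear_combination -i2

lemma rep_triv (hb : b ≠ 0) (q r s : ℤ) (y : ℚ) (hD : (cD 0 q r s : ℤ) = 4 * b)
    (h : RepF 0 q r s y) : ∃ w : Kq b, (⟨y, 1⟩ : Kq b) = w ^ 3 := by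
  obtain ⟨x, z, T, hT, h1, h2⟩ := h
  have hq : (q : ℚ) ≠ 0 := by
    intro h0
    have h0' : q = 0 := by exact_mod_cast h0
    subst h0'
    simp [cD] at hD
    exact hb hD
  have i1 := cubic_id ((0 : ℤ) : ℚ) q r s x z (1 : ℤ) (0 : ℤ)
  have i2 := cubic_id2 ((0 : ℤ) : ℚ) q r s x z (1 : ℤ) (0 : ℤ)
  rw [← cast_cF, ← cast_cF, ← cast_cG, ← cast_cG, h1, h2, ← cast_cD, hD] at i1
  rw [← cast_cF, ← cast_cF, ← cast_cG, ← cast_cG, h1, h2, ← cast_cD, hD] at i2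
  have e1 : cG 0 q r s 1 0 = 2 * q ^ 3 := by unfold cG; ring
  have e2 : cF 0 q r s 1 0 = 0 := by unfold cF; ring
  rw [e1, e2] at i1 i2
  push_cast at i1 i2
  generalize cH2 (0 : ℚ) q r s x z 1 0 = h at i1 i2
  refine ⟨⟨h / (2 * T * q), z / (T * q)⟩, ?_⟩
  rw [Kq_cube, QuadraticAlgebra.mk.injEq]
  constructor
  · field_simp
    linear_combination i1
  · field_simp
    linear_combination i2
end descent

section act
variable {R : Type*} [CommRing R]
/-- Second coefficient of the transformed form. -/
def aq (p q r s α β γ δ : R) : R := p * α ^ 2 * β + q * (α ^ 2 * δ + 2 * α * β * γ) +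
  r * (γ ^ 2 * β + 2 * α * γ * δ) + s * γ ^ 2 * δ
/-- Third coefficient of the transformed form. -/
def ar (p q r s α β γ δ : R) : R := p * α * β ^ 2 + q * (β ^ 2 * γ + 2 * α * β * δ) +
  r * (δ ^ 2 * α + 2 * β * γ * δ) + s * γ * δ ^ 2

lemma act_F (p q r s α β γ δ x y : R) :
    cF (cF p q r s α γ) (aq p q r s α β γ δ) (ar p q r s α β γ δ) (cF p q r s β δ) x y =
    cF p q r s (α * x + β * y) (γ * x + δ * y) := by
  unfold cF aq ar; ring
lemma act_D (p q r s α β γ δ : R) :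
    cD (cF p q r s α γ) (aq p q r s α β γ δ) (ar p q r s α β γ δ) (cF p q r s β δ) =
    (α * δ - β * γ) ^ 6 * cD p q r s := by
  unfold cD cF aq ar; ring
lemma act_P (p q r s α β γ δ : R) :
    (aq p q r s α β γ δ) ^ 2 - (cF p q r s α γ) * (ar p q r s α β γ δ) =
    (α * δ - β * γ) ^ 2 * ((q ^ 2 - p * r) * α ^ 2 + (q * r - p * s) * α * γ + (r ^ 2 - q * s) * γ ^ 2) := by
  unfold cF aq ar; ring
lemma act_Q (p q r s α β γ δ : R) :
    (aq p q r s α β γ δ) * (ar p q r s α β γ δ) - (cF p q r s α γ) * (cF p q r s β δ) =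
    (α * δ - β * γ) ^ 2 * (2 * (q ^ 2 - p * r) * α * β + (q * r - p * s) * (α * δ + β * γ)
       + 2 * (r ^ 2 - q * s) * γ * δ) := by
  unfold cF aq ar; ring
lemma act_R (p q r s α β γ δ : R) :
    (ar p q r s α β γ δ) ^ 2 - (aq p q r s α β γ δ) * (cF p q r s β δ) =
    (α * δ - β * γ) ^ 2 * ((q ^ 2 - p * r) * β ^ 2 + (q * r - p * s) * β * δ + (r ^ 2 - q * s) * δ ^ 2) := by
  unfold cF aq ar; ring

lemma act_G (p q r s α β γ δ x y : R) (h : α * δ - β * γ = 1) :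
    cG (cF p q r s α γ) (aq p q r s α β γ δ) (ar p q r s α β γ δ) (cF p q r s β δ) x y =
    cG p q r s (α * x + β * y) (γ * x + δ * y) := by
  have e1 := act_P p q r s α β γ δ
  have e2 := act_Q p q r s α β γ δ
  have e3 := act_R p q r s α β γ δ
  rw [h, one_pow, one_mul] at e1 e2 e3
  unfold cG
  rw [e1, e2, e3]
  unfold cF aq ar
  linear_combination ((q * (α * x + β * y) ^ 2 + 2 * r * (α * x + β * y) * (γ * x + δ * y) + s * (γ * x + δ * y) ^ 2) * (2 * (q ^ 2 - p * r) * (α * x + β * y) + (q * r - p * s) * (γ * x + δ * y)) -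
  (p * (α * x + β * y) ^ 2 + 2 * q * (α * x + β * y) * (γ * x + δ * y) + r * (γ * x + δ * y) ^ 2) * ((q * r - p * s) * (α * x + β * y) + 2 * (r ^ 2 - q * s) * (γ * x + δ * y))) * h

lemma act_rep (p q r s α β γ δ : ℤ) (h : α * δ - β * γ = 1) (y : ℚ) (hr : RepF p q r s y) :
    RepF (cF p q r s α γ) (aq p q r s α β γ δ) (ar p q r s α β γ δ) (cF p q r s β δ) y := by
  obtain ⟨x, z, T, hT, h1, h2⟩ := hr
  have ex : α * (δ * x - β * z) + β * (α * z - γ * x) = x := by linear_combination x * h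
  have ez : γ * (δ * x - β * z) + δ * (α * z - γ * x) = z := by linear_combination z * h
  refine ⟨δ * x - β * z, α * z - γ * x, T, hT, ?_, ?_⟩
  · rw [act_F, ex, ez, h1]
  · rw [act_G _ _ _ _ _ _ _ _ _ _ h, ex, ez, h2]
end act

section fromPoint

lemma point_coords (b : ℤ) (x y : ℚ) (h : y ^ 2 = x ^ 3 + b) :
    ∃ A B t : ℤ, t ≠ 0 ∧ IsCoprime A t ∧ x = A / t ^ 2 ∧ y = B / t ^ 3 := by
  have hden : y.den ^ 2 = x.den ^ 3 := by
    have := congrArg Rat.den h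
    rwa [Rat.den_pow, Rat.add_intCast_den, Rat.den_pow] at this
  have hd : x.den ∣ y.den := by
    rw [← Nat.pow_dvd_pow_iff (n := 2) (by norm_num), hden]
    exact pow_dvd_pow _ (by norm_num)
  obtain ⟨t, ht⟩ := hd
  have hx0 : 0 < x.den := x.den_pos
  have htd : x.den = t ^ 2 := by
    rw [ht, mul_pow] at hden
    have : x.den ^ 2 * t ^ 2 = x.den ^ 2 * x.den := by rw [hden]; ring
    exact (Nat.eq_of_mul_eq_mul_left (by positivity) this).symm
  have hyd : y.den = t ^ 3 := by rw [ht, htd]; ring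
  have ht0 : t ≠ 0 := by rintro rfl; simp [htd] at hx0
  refine ⟨x.num, y.num, t, by exact_mod_cast ht0, ?_, ?_, ?_⟩
  · have := x.isCoprime_num_den
    rw [htd] at this
    push_cast at this
    exact (IsCoprime.pow_right_iff (by norm_num)).1 this
  · have := x.num_div_den
    rw [htd] at this
    push_cast at this ⊢
    exact this.symm
  · have := y.num_div_den
    rw [hyd] at this
    push_cast at this ⊢
    exact this.symm

lemma form_of_point (b : ℤ) (x y : ℚ) (h : y ^ 2 = x ^ 3 + b) :
    ∃ p q r s : ℤ, cD p q r s = 4 * b ∧ RepF p q r s y := by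
  obtain ⟨A, B, t, ht, hco, rfl, rfl⟩ := point_coords b x y h
  have htq : (t : ℚ) ≠ 0 := by exact_mod_cast ht
  have hAB : B ^ 2 = A ^ 3 + b * t ^ 6 := by
    field_simp at h
    rw [mul_comm]
    exact_mod_cast h
  obtain ⟨u, v, huv⟩ : IsCoprime A (t ^ 6) := hco.pow_right
  set β := u * B with hβ
  have hβA : ∃ k, β * A = B + t ^ 6 * k := ⟨-v * B, by rw [hβ]; linear_combination B * huv⟩
  obtain ⟨k, hk⟩ := hβA
  have hβ2 : ∃ l, β ^ 2 = A + t ^ 6 * l := by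
    have hdv : t ^ 6 ∣ A ^ 2 * (β ^ 2 - A) := by
      refine ⟨2 * B * k + t ^ 6 * k ^ 2 + b, ?_⟩
      linear_combination hAB + (β * A + B + t ^ 6 * k) * hk
    have hco2 : IsCoprime (t ^ 6) (A ^ 2) := hco.symm.pow
    obtain ⟨l, hl⟩ := hco2.dvd_of_dvd_mul_left hdv
    exact ⟨l, by linear_combination hl⟩
  obtain ⟨l, hl⟩ := hβ2
  have hG : cG (t ^ 3) β (t ^ 3 * l) (β * l - 2 * k) 1 0 = 2 * B := by
    unfold cG
    linear_combination (2 * β) * hl + 2 * hk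
  have hF : cF (t ^ 3) β (t ^ 3 * l) (β * l - 2 * k) 1 0 = t ^ 3 := by unfold cF; ring
  refine ⟨t ^ 3, β, t ^ 3 * l, β * l - 2 * k, ?_, 1, 0, t, htq, ?_, ?_⟩
  · have i1 := cubic_id (t ^ 3) β (t ^ 3 * l) (β * l - 2 * k) 1 0 1 0
    rw [hG, hF] at i1
    have hH : cH2 (t ^ 3) β (t ^ 3 * l) (β * l - 2 * k) 1 0 1 0 = 2 * A := by
      unfold cH2; linear_combination 2 * hl
    rw [hH] at i1
    have : (2 * t ^ 6) * cD (t ^ 3) β (t ^ 3 * l) (β * l - 2 * k) = (2 * t ^ 6) * (4 * b) := by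
      linear_combination -i1 + 8 * hAB
    exact mul_left_cancel₀ (by positivity) this
  · rw [hF]; push_cast; ring
  · rw [hG]; push_cast; field_simp
end fromPoint

section index

lemma index_le_of_map {G : Type*} [AddCommGroup G] (H : AddSubgroup G) {T : Type*} (S : Set T)
    (hS : S.Finite) (f : G → T) (hf : ∀ x, x ∉ H → f x ∈ S)
    (hr : ∀ x y, x ∉ H → y ∉ H → f x = f y → x - y ∈ H) : H.index ≠ 0 ∧ H.index ≤ S.ncard + 1 := by
  classical
  have := hS.fintype
  let g : G ⧸ H → Option S := fun z =>
    if h : z.out ∈ H then none else some ⟨f z.out, hf _ h⟩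
  have hg : Function.Injective g := by
    intro z w hzw
    simp only [g] at hzw
    have key : z.out - w.out ∈ H := by
      split_ifs at hzw with h1 h2 h2
      · exact sub_mem h1 h2
      · exact hr _ _ h1 h2 (by simpa using hzw)
    rw [← z.out_eq', ← w.out_eq']
    refine QuotientAddGroup.eq.2 ?_
    rw [neg_add_eq_sub, ← neg_mem_iff, neg_sub]
    exact key
  have : Finite (G ⧸ H) := Finite.of_injective g hg
  refine ⟨?_, ?_⟩
  · rw [AddSubgroup.index]; exact Nat.card_pos.ne'
  · have := Nat.card_le_card_of_injective g hg
    rw [Nat.card_eq_fintype_card (α := Option S), Fintype.card_option] at this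
    rw [AddSubgroup.index, Set.ncard_eq_toFinset_card', Set.toFinset_card]
    exact this

/-- `S` contains a representative of each class of forms of invariant `b` with nonzero first coefficient. -/
def Covers (b : ℤ) (S : Set (ℤ × ℤ × ℤ × ℤ)) : Prop :=
  ∀ p q r s : ℤ, cD p q r s = 4 * b → ∃ α β γ δ : ℤ, α * δ - β * γ = 1 ∧
    (cF p q r s α γ = 0 ∨
      (cF p q r s α γ, aq p q r s α β γ δ, ar p q r s α β γ δ, cF p q r s β δ) ∈ S)

theorem phi_index (a : ℚ) (ha : a ≠ 0) (b : ℤ) (hb : -27 * a = b) (hsq : ∀ r : ℚ, r ^ 2 ≠ b)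
    (S : Set (ℤ × ℤ × ℤ × ℤ)) (hS : S.Finite) (hc : Covers b S) :
    (phi ha).range.index ≠ 0 ∧ (phi ha).range.index ≤ S.ncard + 1 := by
  have hb0 : -27 * a ≠ 0 := m27 ha
  have main : ∀ P : (Ew (-27 * a)).Point, P ∉ (phi ha).range → ∃ F : ℤ × ℤ × ℤ × ℤ, F ∈ S ∧
      ∃ x y h, P = Point.some x y h ∧ cD F.1 F.2.1 F.2.2.1 F.2.2.2 = 4 * b ∧
        RepF F.1 F.2.1 F.2.2.1 F.2.2.2 y := by
    rintro (_ | ⟨x, y, h⟩) hP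
    · exact absurd (zero_mem _) hP
    · have E := Ew_eq h
      rw [hb] at E
      obtain ⟨p, q, r, s, hD, hR⟩ := form_of_point b x y E
      obtain ⟨α, β, γ, δ, hdet, hh⟩ := hc p q r s hD
      have hR' := act_rep p q r s α β γ δ hdet y hR
      have hD' := act_D p q r s α β γ δ
      rw [hdet, one_pow, one_mul, hD] at hD'
      rcases hh with h0 | hmem
      · rw [h0] at hR' hD'
        obtain ⟨w, hw⟩ := rep_triv hb0 _ _ _ y (by rw [hD', hb]; push_cast; ring) hR'
        exact absurd (kernel_phi ha x y h w hw) hP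
      · exact ⟨_, hmem, x, y, h, rfl, hD', hR'⟩
  choose! f hf using main
  refine index_le_of_map _ S hS f (fun P hP => (hf P hP).1) ?_
  intro P Q hP hQ hPQ
  obtain ⟨-, x, y, h, rfl, hD, x1, z1, T, hT, e1, e2⟩ := hf P hP
  obtain ⟨-, x', y', h', rfl, hD', x1', z1', T', hT', e1', e2'⟩ := hf Q hQ
  rw [← hPQ] at e1' e2'
  obtain ⟨w, hw⟩ := rep_cube (b := -27 * a) _ _ _ _ x1 z1 x1' z1' y y' T T' (by rw [hD, hb]; push_cast; ring)
    hT hT' e1 e2 e1' e2'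
  exact rel_phi ha (by rw [hb]; exact hsq) _ _ _ _ _ _ w hw
end index

open WeierstrassCurve.Affine
set_option linter.unusedSimpArgs false
set_option linter.style.longLine false

section heights
variable {a : ℚ}

lemma addSub_eval (s t u : ℚ) : (fun i => ((Ew a).addSubMap i).eval ![s, t, u]) =
    ![s ^ 2 - 4 * a * t * u, 2 * t * s + 4 * a * u ^ 2, t ^ 2 - 4 * s * u] := by
  funext i
  fin_cases i <;> simp [WeierstrassCurve.addSubMap, Ew, WeierstrassCurve.b₂, WeierstrassCurve.b₄,
    WeierstrassCurve.b₆, WeierstrassCurve.b₈]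

lemma addSub_sym2x (ha : a ≠ 0) (P Q : (Ew a).Point) : ∃ c : ℚ, c ≠ 0 ∧
    (fun i => ((Ew a).addSubMap i).eval (P.sym2x Q)) = c • (P + Q).sym2x (P - Q) := by
  have dbl : ∀ P : (Ew a).Point, ∃ c : ℚ, c ≠ 0 ∧
    (fun i => ((Ew a).addSubMap i).eval (P.sym2x P)) = c • (P + P).sym2x 0 := by
    intro P
    rcases Ew_add_cases P P with h | h | h | h
    · subst h; refine ⟨1, one_ne_zero, ?_⟩
      simp [addSub_eval]
    · subst h; refine ⟨1, one_ne_zero, ?_⟩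
      simp [addSub_eval]
    · have h0 : P + P = 0 := by nth_rewrite 2 [h]; exact add_neg_cancel P
      rw [h0]
      rcases P with _ | ⟨x, y, hh⟩
      · refine ⟨1, one_ne_zero, ?_⟩
        rw [← Point.zero_def]; simp [addSub_eval]
      · rw [Point.neg_some, Point.some.injEq, Ew_negY] at h
        have hy : y = 0 := by linarith [h.2]
        have E := Ew_eq hh
        rw [hy] at E
        have hx : x ≠ 0 := by rintro rfl; apply ha; linarith
        refine ⟨9 * x ^ 4, by positivity, ?_⟩
        rw [Point.sym2x_some_some, addSub_eval, Point.sym2x_zero_zero]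
        ext i; fin_cases i
        · simp; linear_combination 8 * x * E
        · simp; linear_combination -4 * E
        · simp; ring
    · obtain ⟨x₁, y₁, g₁, x₂, y₂, g₂, m, x₃, y₃, g₃, e1, e2, e3, D⟩ := h
      rw [e3, e1, Point.sym2x_some_some, addSub_eval, Point.sym2x_some_zero]
      have e4 := e1.symm.trans e2
      rw [Point.some.injEq] at e4
      obtain ⟨rfl, rfl⟩ := e4
      rcases D.cs with h | ⟨-, -, hm, hy⟩
      · exact absurd rfl h
      · have E := D.e₁
        refine ⟨4 * y₁ ^ 2, by positivity, ?_⟩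
        ext i; fin_cases i
        · simp
          rw [D.hx]
          linear_combination (-2 * m * y₁ - 3 * x₁ ^ 2) * hm + 8 * x₁ * E
        · simp; linear_combination -4 * E
        · simp; ring
  by_cases hQP : Q = P
  · subst hQP; rw [sub_self]; exact dbl Q
  by_cases hQP' : Q = -P
  · subst hQP'
    rw [add_neg_cancel, sub_neg_eq_add, Point.sym2x_comm 0, Point.sym2x_neg_right]; exact dbl P
  rcases Ew_add_cases P Q with h | h | h | h
  · subst h
    refine ⟨1, one_ne_zero, ?_⟩
    rw [zero_add, zero_sub, Point.sym2x_neg_right, one_smul]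
    rcases Q with _ | ⟨x, y, hh⟩
    · exact absurd rfl hQP
    · rw [Point.sym2x_some_some, Point.sym2x_zero_some, addSub_eval]
      ext i; fin_cases i <;> simp <;> ring
  · subst h
    refine ⟨1, one_ne_zero, ?_⟩
    rw [add_zero, sub_zero, one_smul]
    rcases P with _ | ⟨x, y, hh⟩
    · exact absurd rfl hQP
    · rw [Point.sym2x_some_some, Point.sym2x_some_zero, addSub_eval]
      ext i; fin_cases i <;> simp <;> ring
  · exact absurd h hQP'
  · obtain ⟨x₁, y₁, g₁, x₂, y₂, g₂, m, x₃, y₃, g₃, e1, e2, e3, D⟩ := h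
    rcases Ew_add_cases P (-Q) with h | h | h | h
    · rw [e1] at h; exact absurd h (Point.some_ne_zero _)
    · rw [e2, neg_eq_zero] at h; exact absurd h (Point.some_ne_zero _)
    · exact absurd (neg_injective h) hQP
    · obtain ⟨x₁', y₁', g₁', x₂', y₂', g₂', m', x₃', y₃', g₃', e1', e2', e3', D'⟩ := h
      rw [sub_eq_add_neg, e3, e3']
      have e4 := e1.symm.trans e1'
      rw [Point.some.injEq] at e4
      obtain ⟨rfl, rfl⟩ := e4
      rw [e2, Point.neg_some, Point.some.injEq, Ew_negY] at e2'
      obtain ⟨rfl, rfl⟩ := e2'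
      rw [e1, e2, Point.sym2x_some_some, Point.sym2x_some_some, addSub_eval]
      have hne : x₁ ≠ x₂ := by
        intro h
        subst h
        have : (y₁ - y₂) * (y₁ + y₂) = 0 := by linear_combination D.e₁ - D.e₂
        rcases mul_eq_zero.1 this with h | h
        · apply hQP; rw [e1, e2, Point.some.injEq]; exact ⟨rfl, by linarith⟩
        · apply hQP'; rw [e1, e2, Point.neg_some, Point.some.injEq, Ew_negY]; exact ⟨rfl, by linarith⟩
      have hd : x₂ - x₁ ≠ 0 := sub_ne_zero.2 (Ne.symm hne)
      have hm : m = (y₂ - y₁) / (x₂ - x₁) := by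
        rw [eq_div_iff hd]; linear_combination -D.hl
      have hm' : m' = (-y₂ - y₁) / (x₂ - x₁) := by
        rw [eq_div_iff hd]; linear_combination -D'.hl
      have E1 := D.e₁
      have E2 := D.e₂
      have h3 : (x₂ - x₁) ^ 2 * x₃ = (y₂ - y₁) ^ 2 - (x₂ - x₁) ^ 2 * (x₁ + x₂) := by
        rw [D.hx, hm]; field_simp; ring
      have h3' : (x₂ - x₁) ^ 2 * x₃' = (y₂ + y₁) ^ 2 - (x₂ - x₁) ^ 2 * (x₁ + x₂) := by
        rw [D'.hx, hm']; field_simp; ring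
      refine ⟨(x₂ - x₁) ^ 2, by positivity, ?_⟩
      ext i; fin_cases i
      · simp
        have h4 : (x₂ - x₁) ^ 2 * ((x₂ - x₁) ^ 2 * (x₃ * x₃')) = (x₂ - x₁) ^ 2 * ((x₁ * x₂) ^ 2 - 4 * a * (x₁ + x₂)) := by
          have e5 : (x₂ - x₁) ^ 2 * ((x₂ - x₁) ^ 2 * (x₃ * x₃')) =
            ((y₂ - y₁) ^ 2 - (x₂ - x₁) ^ 2 * (x₁ + x₂)) * ((y₂ + y₁) ^ 2 - (x₂ - x₁) ^ 2 * (x₁ + x₂)) := by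
            rw [← h3, ← h3']; ring
          have e6 : ((y₂ - y₁) ^ 2 - (x₂ - x₁) ^ 2 * (x₁ + x₂)) * ((y₂ + y₁) ^ 2 - (x₂ - x₁) ^ 2 * (x₁ + x₂)) =
            (y₂ ^ 2 - y₁ ^ 2) ^ 2 - 2 * (y₂ ^ 2 + y₁ ^ 2) * ((x₂ - x₁) ^ 2 * (x₁ + x₂)) + ((x₂ - x₁) ^ 2 * (x₁ + x₂)) ^ 2 := by
            ring
          rw [e5, e6, E1, E2]; ring
        exact (mul_left_cancel₀ (pow_ne_zero 2 hd) h4).symm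
      · simp
        linear_combination -h3 - h3' - 2 * E1 - 2 * E2
      · simp; ring

/-- The naive height. -/
noncomputable def nh (P : (Ew a).Point) : ℝ := Height.logHeight P.xRep

lemma Ew_ell (ha : a ≠ 0) : (Ew a).IsElliptic := by
  refine ⟨?_⟩
  simp [Ew, WeierstrassCurve.Δ, WeierstrassCurve.b₂, WeierstrassCurve.b₄, WeierstrassCurve.b₆,
    WeierstrassCurve.b₈, ha]

lemma parallelogram (ha : a ≠ 0) : ∃ C : ℝ, ∀ P Q : (Ew a).Point,
    |nh (P + Q) + nh (P - Q) - 2 * (nh P + nh Q)| ≤ C := by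
  have := Ew_ell ha
  obtain ⟨C₁, h1⟩ := WeierstrassCurve.abs_logHeight_addSubMap_sub_two_mul_logHeight_le (Ew a)
  obtain ⟨C₂, h2⟩ := Height.abs_logHeight_sym2_sub_le ℚ
  have h2' : ∀ P Q : (Ew a).Point, |Height.logHeight (P.sym2x Q) - (nh P + nh Q)| ≤ C₂ := by
    intro P Q
    have e : ∀ R : (Ew a).Point, R.xRep = ![R.xRep 0, R.xRep 1] := fun R => by
      ext i; fin_cases i <;> rfl
    have := h2 (a := P.xRep 0) (b := P.xRep 1) (c := Q.xRep 0) (d := Q.xRep 1)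
      (by rw [← e]; exact P.xRep_ne_zero) (by rw [← e]; exact Q.xRep_ne_zero)
    rw [← e, ← e] at this
    exact this
  refine ⟨C₁ + 3 * C₂, fun P Q => ?_⟩
  obtain ⟨c, hc, e⟩ := addSub_sym2x ha P Q
  have h3 := h1 (P.sym2x Q)
  rw [e, Height.logHeight_smul_eq_logHeight _ hc] at h3
  have h4 := h2' P Q
  have h5 := h2' (P + Q) (P - Q)
  rw [abs_le] at *
  constructor <;> linarith

lemma nh_nonneg (P : (Ew a).Point) : 0 ≤ nh P := Height.logHeight_nonneg _

lemma nh_north : Northcott (nh : (Ew a).Point → ℝ) := by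
  refine ⟨fun B => ?_⟩
  have h0 : {x : ℚ | Height.logHeight₁ x ≤ B}.Finite := Northcott.finite_le B
  have h1 : (insert (![1, 0] : Fin 2 → ℚ) ((fun x : ℚ => (![x, 1] : Fin 2 → ℚ)) '' {x : ℚ | Height.logHeight₁ x ≤ B})).Finite :=
    (h0.image _).insert _
  refine Set.Finite.of_finite_fibers (fun P : (Ew a).Point => P.xRep) (h1.subset ?_) ?_
  · rintro _ ⟨P, hP, rfl⟩
    rcases P with _ | ⟨x, y, h⟩
    · left; rfl
    · right; refine ⟨x, ?_, rfl⟩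
      simp only [Set.mem_ofPred_eq] at hP ⊢
      rw [Height.logHeight₁_eq_logHeight]
      exact hP
  · rintro _ ⟨P, hP, rfl⟩
    refine Set.Finite.subset (Set.toFinite {P, -P}) ?_
    rintro Q ⟨-, hQ⟩
    simp only [Set.mem_preimage, Set.mem_singleton_iff] at hQ
    simpa using Point.eq_or_eq_neg_of_xRep_eq_xRep hQ

theorem Ew_fg (ha : a ≠ 0)
    (h3 : (nsmulAddMonoidHom 3 : (Ew a).Point →+ (Ew a).Point).range.index ≠ 0) :
    AddGroup.FG (Ew a).Point := by
  obtain ⟨C, hC⟩ := parallelogram ha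
  have := nh_north (a := a)
  refine AddCommGroup.fg_of_descent (n := 3) (h := nh) (a := 2) (b := 9) (c₀ := 3 * C + 2 * nh (0 : (Ew a).Point))
    (c := fun g => 2 * nh g + C) (by norm_num) (by norm_num) ⟨h3⟩ ?_ ?_
  · intro g x
    have h1 := hC (g + x) g
    have h2 := nh_nonneg (g + x + g)
    rw [add_sub_cancel_left, abs_le] at h1
    linarith [h1.1]
  · intro x
    have h1 := hC x x
    have h2 := hC (x + x) x
    rw [sub_self] at h1
    rw [add_sub_cancel_right] at h2
    have e : 3 • x = x + x + x := by abel
    rw [e]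
    rw [abs_le] at h1 h2
    linarith [h1.1, h2.1]
end heights

section rank
open TensorProduct

theorem rank_of_fg (A : Type) [AddCommGroup A] (hfg : AddGroup.FG A)
    (h3 : (nsmulAddMonoidHom 3 : A →+ A).range.index ≠ 0) :
    ∃ n : ℕ, Module.rank ℚ (ℚ ⊗[ℤ] A) ≤ n ∧ 3 ^ n ≤ (nsmulAddMonoidHom 3 : A →+ A).range.index := by
  obtain ⟨n, ι, hι, p, hp, e, ⟨f⟩⟩ := AddCommGroup.equiv_free_prod_directSum_zmod A
  classical
  refine ⟨n, ?_, ?_⟩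
  · have htor : ∀ t : DirectSum ι fun i => ZMod (p i ^ e i), ∃ N : ℕ, N ≠ 0 ∧ N • t = 0 := by
      intro t
      refine ⟨∏ i, p i ^ e i, Finset.prod_ne_zero_iff.2 fun i _ => pow_ne_zero _ (hp i).ne_zero, ?_⟩
      ext i
      rw [DirectSum.smul_apply, nsmul_eq_mul]
      have : ((∏ i, p i ^ e i : ℕ) : ZMod (p i ^ e i)) = 0 := by
        rw [ZMod.natCast_eq_zero_iff]; exact Finset.dvd_prod_of_mem _ (Finset.mem_univ i)
      rw [this, zero_mul]; rfl
    let v : Fin n → ℚ ⊗[ℤ] A := fun i => (1 : ℚ) ⊗ₜ[ℤ] (f.symm (Finsupp.single i 1, 0))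
    have hone : ∀ x : A, (1 : ℚ) ⊗ₜ[ℤ] x ∈ Submodule.span ℚ (Set.range v) := by
      intro x
      have hx : x = f.symm ((f x).1, 0) + f.symm (0, (f x).2) := by
        rw [← map_add]; simp
      rw [hx, tmul_add]
      refine add_mem ?_ ?_
      · induction (f x).1 using Finsupp.induction_linear with
        | zero => 
          have : ((0 : Fin n →₀ ℤ), (0 : DirectSum ι fun i => ZMod (p i ^ e i))) = 0 := rfl
          rw [this, map_zero, tmul_zero]; exact zero_mem _
        | add g h hg hh =>
          have : ((g + h : Fin n →₀ ℤ), (0 : DirectSum ι fun i => ZMod (p i ^ e i))) = (g, 0) + (h, 0) := by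
            simp
          rw [this, map_add, tmul_add]; exact add_mem hg hh
        | single i c =>
          have : ((Finsupp.single i c : Fin n →₀ ℤ), (0 : DirectSum ι fun i => ZMod (p i ^ e i))) =
             c • (Finsupp.single i 1, 0) := by
            simp
          rw [this, map_zsmul, tmul_smul]
          exact zsmul_mem (Submodule.subset_span (Set.mem_range_self (f := v) i)) c
      · obtain ⟨N, hN, h0⟩ := htor (f x).2
        have h1 : (N : ℚ) • ((1 : ℚ) ⊗ₜ[ℤ] (f.symm (0, (f x).2))) = 0 := by
          rw [Nat.cast_smul_eq_nsmul, ← tmul_smul, ← map_nsmul]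
          have : N • ((0 : Fin n →₀ ℤ), (f x).2) = 0 := by
            rw [Prod.smul_mk, h0, smul_zero]; rfl
          rw [this, map_zero, tmul_zero]
        have h2 := (smul_eq_zero.1 h1).resolve_left (by exact_mod_cast hN)
        rw [h2]; exact zero_mem _
    have htop : Submodule.span ℚ (Set.range v) = ⊤ := by
      rw [eq_top_iff]
      rintro x -
      induction x with
      | zero => exact zero_mem _
      | add x y hx hy => exact add_mem hx hy
      | tmul q x =>
        have : q ⊗ₜ[ℤ] x = q • ((1 : ℚ) ⊗ₜ[ℤ] x) := by rw [smul_tmul', smul_eq_mul, mul_one]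
        rw [this]; exact Submodule.smul_mem _ _ (hone x)
    have h1 := rank_span_le (R := ℚ) (Set.range v)
    rw [htop, rank_top] at h1
    refine h1.trans ?_
    have := Cardinal.mk_range_le (f := v)
    simpa using this
  · let g : A →+ (Fin n → ZMod 3) := 
      { toFun := fun x i => (((f x).1 i : ℤ) : ZMod 3)
        map_zero' := by ext i; simp
        map_add' := fun x y => by ext i; simp }
    have hg : Function.Surjective g := by
      intro w
      refine ⟨f.symm (Finsupp.equivFunOnFinite.symm (fun i => ((w i).val : ℤ)), 0), ?_⟩
      ext i
      simp [g]
    have hle : (nsmulAddMonoidHom 3 : A →+ A).range ≤ g.ker := by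
      rintro _ ⟨x, rfl⟩
      rw [AddMonoidHom.mem_ker, nsmulAddMonoidHom_apply, map_nsmul]
      ext i
      simp only [Pi.smul_apply, nsmul_eq_mul, Pi.zero_apply]
      have : ((3 : ℕ) : ZMod 3) = 0 := by decide
      rw [this, zero_mul]
    have hk : g.ker.index = 3 ^ n := by
      rw [AddSubgroup.index_ker, AddMonoidHom.range_eq_top.2 hg]
      simp [Nat.card_eq_fintype_card]
    rw [← hk]
    exact Nat.le_of_dvd (Nat.pos_of_ne_zero h3) (AddSubgroup.index_dvd_of_le hle)
end rank

open TensorProduct in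
theorem rank_bound (a : ℤ) (ha : a ≠ 0) (h1 : ∀ r : ℚ, r ^ 2 ≠ ((-27 * a : ℤ) : ℚ))
    (h2 : ∀ r : ℚ, r ^ 2 ≠ ((729 * a : ℤ) : ℚ)) (S₁ S₂ : Set (ℤ × ℤ × ℤ × ℤ)) (f₁ : S₁.Finite)
    (f₂ : S₂.Finite) (c₁ : Covers (-27 * a) S₁) (c₂ : Covers (729 * a) S₂) :
    ∃ n : ℕ, Module.rank ℚ (ℚ ⊗[ℤ] (Ew (a : ℚ)).Point) ≤ n ∧
      3 ^ n ≤ (S₁.ncard + 1) * (S₂.ncard + 1) := by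
  have ha' : (a : ℚ) ≠ 0 := by exact_mod_cast ha
  have p1 := phi_index (a : ℚ) ha' (-27 * a) (by push_cast; ring) h1 S₁ f₁ c₁
  have p2 := phi_index (-27 * a : ℚ) (m27 ha') (729 * a) (by push_cast; ring) h2 S₂ f₂ c₂
  have h3 := index_three ha' p1.1 p2.1
  obtain ⟨n, hn, hn'⟩ := rank_of_fg _ (Ew_fg ha' h3.1) h3.1
  exact ⟨n, hn, hn'.trans (h3.2.trans (Nat.mul_le_mul p1.2 p2.2))⟩

open WeierstrassCurve.Affine
set_option linter.unusedSimpArgs false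
set_option linter.style.longLine false

/-- Reduction of positive definite binary quadratic forms. -/
lemma quad_reduce (L M N : ℝ) (hL : 0 < L) (hD : 0 < 4 * L * N - M ^ 2) :
    ∃ α β γ δ : ℤ, α * δ - β * γ = 1 ∧
      |2 * L * α * β + M * (α * δ + β * γ) + 2 * N * γ * δ| ≤ L * α ^ 2 + M * α * γ + N * γ ^ 2 ∧
      L * α ^ 2 + M * α * γ + N * γ ^ 2 ≤ L * β ^ 2 + M * β * δ + N * δ ^ 2 := by
  obtain ⟨u, v, hv, hM, hN⟩ : ∃ u v : ℝ, 0 < v ∧ M = -2 * L * u ∧ N = L * (u ^ 2 + v ^ 2) := by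
    refine ⟨-M / (2 * L), √(4 * L * N - M ^ 2) / (2 * L), by positivity, by field_simp, ?_⟩
    rw [div_pow, div_pow, Real.sq_sqrt hD.le]; field_simp; ring
  let τ : UpperHalfPlane := ⟨⟨u, v⟩, hv⟩
  obtain ⟨g, h1, h2⟩ := ModularGroup.exists_smul_mem_fd τ
  have hdet := g.det_coe
  rw [Matrix.det_fin_two] at hdet
  have hz := UpperHalfPlane.coe_specialLinearGroup_apply g τ
  have h2' : |((g • τ : UpperHalfPlane) : ℂ).re| ≤ 1 / 2 := h2
  generalize ((g • τ : UpperHalfPlane) : ℂ) = z at *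
  obtain ⟨x, y⟩ := z
  generalize g 0 0 = a at *
  generalize g 0 1 = b at *
  generalize g 1 0 = c at *
  generalize g 1 1 = d at *
  have hcd : ((c : ℝ) * u + d) ^ 2 + (c * v) ^ 2 ≠ 0 := by
    intro h
    have e1 : (c : ℝ) * v = 0 := by nlinarith [sq_nonneg ((c : ℝ) * u + d), sq_nonneg ((c : ℝ) * v)]
    have e2 : (c : ℝ) * u + d = 0 := by nlinarith [sq_nonneg ((c : ℝ) * u + d), sq_nonneg ((c : ℝ) * v)]
    have e3 : (c : ℝ) = 0 := by
      rcases mul_eq_zero.1 e1 with h | h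
      · exact h
      · exact absurd h hv.ne'
    have e4 : (d : ℝ) = 0 := by rw [e3] at e2; linarith
    have e5 : c = 0 := by exact_mod_cast e3
    have e6 : d = 0 := by exact_mod_cast e4
    subst e5; subst e6; simp at hdet
  have hne : (((algebraMap ℤ ℝ c : ℝ) : ℂ) * (τ : ℂ) + ((algebraMap ℤ ℝ d : ℝ) : ℂ)) ≠ 0 := by
    intro h
    rw [Complex.ext_iff] at h
    simp [τ] at h
    apply hcd
    rw [h.1]
    rcases h.2 with h | h
    · rw [h]; simp
    · rw [h]; simp
  rw [eq_div_iff hne, Complex.ext_iff] at hz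
  simp [τ] at hz
  obtain ⟨z1, z2⟩ := hz
  simp [Complex.normSq_apply] at h1
  simp at h2'
  have hd : (0 : ℝ) ≤ L * ((c * u + d) ^ 2 + (c * v) ^ 2) := by positivity
  have E1 : L * (d : ℝ) ^ 2 + M * d * (-c) + N * (-c) ^ 2 = L * ((c * u + d) ^ 2 + (c * v) ^ 2) := by
    rw [hM, hN]; ring
  have E2 : 2 * L * (d : ℝ) * (-b) + M * (d * a + (-b) * (-c)) + 2 * N * (-c) * a
      = -2 * x * (L * ((c * u + d) ^ 2 + (c * v) ^ 2)) := by
    rw [hM, hN]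
    linear_combination 2 * L * (c * u + d) * z1 + 2 * L * (c * v) * z2
  have E3 : L * (-b : ℝ) ^ 2 + M * (-b) * a + N * a ^ 2 = (x * x + y * y) * (L * ((c * u + d) ^ 2 + (c * v) ^ 2)) := by
    rw [hM, hN]
    linear_combination (-L) * (x * (c * u + d) - y * (c * v) + a * u + b) * z1 - L * (x * (c * v) + y * (c * u + d) + a * v) * z2
  refine ⟨d, -b, -c, a, by linarith, ?_, ?_⟩
  · push_cast
    rw [E1, E2, abs_mul, abs_of_nonneg hd, abs_mul]
    rw [show |(-2 : ℝ)| = 2 by norm_num]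
    nlinarith
  · push_cast
    rw [E1, E3]
    nlinarith

open WeierstrassCurve.Affine
set_option linter.unusedSimpArgs false
set_option linter.style.longLine false

lemma exists_t (L N : ℝ) (hL : 0 < L) (hLN : L ≤ N) :
    ∃ t u : ℝ, 1 ≤ t ∧ 0 < u ∧ t * u = 1 ∧ t ^ 4 * L = N := by
  have h1 : 1 ≤ N / L := by rw [le_div_iff₀ hL]; linarith
  have h2 : 1 ≤ √√(N / L) := by
    rw [Real.one_le_sqrt, Real.one_le_sqrt]; exact h1
  refine ⟨√√(N / L), (√√(N / L))⁻¹, h2, by positivity, mul_inv_cancel₀ (by positivity), ?_⟩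
  rw [show (4 : ℕ) = 2 * 2 from rfl, pow_mul, Real.sq_sqrt (by positivity), Real.sq_sqrt (by positivity)]
  field_simp

/-- The reduced region. -/
def InBox (Λ p q r s : ℝ) : Prop := ∃ t : ℝ, 1 ≤ t ∧ |p| * t ^ 3 ≤ 24 * Λ ∧ |q| * t ≤ 24 * Λ ∧
  |r| ≤ 24 * Λ * t ∧ |s| ≤ 24 * Λ * t ^ 3 ∧
  (|p * s - q * r| * t ^ 2 ≤ 24 * Λ ^ 2 ∨ |p * s - 9 * q * r| * t ^ 2 ≤ 24 * Λ ^ 2)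

lemma InBox.mono {Λ Λ' p q r s : ℝ} (h0 : 0 ≤ Λ) (hl : Λ ≤ Λ') (h : InBox Λ p q r s) : InBox Λ' p q r s := by
  obtain ⟨t, ht, h1, h2, h3, h4, h5⟩ := h
  have hs : Λ ^ 2 ≤ Λ' ^ 2 := by gcongr
  refine ⟨t, ht, by linarith, by linarith, h3.trans (by gcongr), h4.trans (by gcongr), ?_⟩
  rcases h5 with h5 | h5
  · left; linarith
  · right; linarith

set_option maxHeartbeats 1000000 in
lemma boxA (l p q r s : ℝ) (hl : 0 < l) (hP : 0 < q ^ 2 - p * r) (h1 : |q * r - p * s| ≤ q ^ 2 - p * r)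
    (h2 : q ^ 2 - p * r ≤ r ^ 2 - q * s) (hD : cD p q r s = -4 * l ^ 4) : InBox l p q r s := by
  obtain ⟨t, u, ht, hu, htu, htP⟩ := exists_t _ _ hP h2
  have hF : ∀ x y : ℝ, l ^ 4 * cF p q r s x y ^ 2 ≤
      ((q ^ 2 - p * r) * x ^ 2 + (q * r - p * s) * x * y + (r ^ 2 - q * s) * y ^ 2) ^ 3 := by
    intro x y
    have := cubic_id p q r s x y x y
    have e : cH2 p q r s x y x y = 2 * ((q ^ 2 - p * r) * x ^ 2 + (q * r - p * s) * x * y + (r ^ 2 - q * s) * y ^ 2) := by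
      unfold cH2; ring
    rw [e, hD] at this
    nlinarith [sq_nonneg (cG p q r s x y)]
  have hD' : (q * r - p * s) ^ 2 - 4 * (q ^ 2 - p * r) * (r ^ 2 - q * s) = -4 * l ^ 4 := hD
  have f1 := hF 1 0
  have f2 := hF 0 1
  have f3 := hF t u
  have f4 := hF t (-u)
  clear hF hD
  have hpe : ∃ P Q R : ℝ, P = q ^ 2 - p * r ∧ Q = q * r - p * s ∧ R = r ^ 2 - q * s := ⟨_, _, _, rfl, rfl, rfl⟩
  obtain ⟨P, Q, R, eP, eQ, eR⟩ := hpe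
  rw [← eP, ← eQ, ← eR] at hD' f3 f4
  rw [← eP, ← eQ] at h1
  rw [← eP, ← eR] at h2 htP
  rw [← eP] at hP
  rw [← eP, ← eQ, ← eR] at f1 f2
  obtain ⟨h, hh⟩ : ∃ h : ℝ, h = t ^ 2 * P := ⟨_, rfl⟩
  have hpos : 0 < h := by rw [hh]; positivity
  have hh2 : h ^ 2 = P * R := by rw [hh, ← htP]; ring
  have hQ2 : Q ^ 2 ≤ P ^ 2 := by rw [← sq_abs Q]; gcongr
  have hhl : h ≤ 2 * l ^ 2 := by
    apply le_of_sq_le_sq _ (by positivity)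
    nlinarith
  have hh3 : h ^ 3 ≤ 8 * l ^ 6 := by
    calc h ^ 3 ≤ (2 * l ^ 2) ^ 3 := by gcongr
      _ = _ := by ring
  have hl4 : 0 < l ^ 4 := by positivity
  have hPh : P ≤ h := by rw [hh]; exact le_mul_of_one_le_left hP.le (one_le_pow₀ ht)
  have hQh : |Q| ≤ h := h1.trans hPh
  have key : ∀ z c : ℝ, 0 < c → l ^ 4 * z ^ 2 ≤ c ^ 2 * l ^ 6 → |z| ≤ c * l := by
    intro z c hc hz
    apply abs_le_of_sq_le_sq _ (by positivity)
    have : l ^ 4 * z ^ 2 ≤ l ^ 4 * (c * l) ^ 2 := by linarith [hz, show l ^ 4 * (c * l) ^ 2 = c ^ 2 * l ^ 6 by ring]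
    exact le_of_mul_le_mul_left this hl4
  have g1 : |p * t ^ 3| ≤ 3 * l := by
    apply key _ _ (by norm_num)
    have : l ^ 4 * (p * t ^ 3) ^ 2 ≤ h ^ 3 := by
      have e : l ^ 4 * p ^ 2 ≤ P ^ 3 := by convert f1 using 1 <;> (try unfold cF) <;> ring
      calc _ = (l ^ 4 * p ^ 2) * t ^ 6 := by ring
        _ ≤ P ^ 3 * t ^ 6 := by gcongr
        _ = _ := by rw [hh]; ring
    nlinarith [show 0 < l ^ 6 by positivity]
  have e6 : ∀ n : ℕ, t ^ n * u ^ n = 1 := by intro n; rw [← mul_pow, htu, one_pow]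
  have g2 : |s * u ^ 3| ≤ 3 * l := by
    apply key _ _ (by norm_num)
    have : l ^ 4 * (s * u ^ 3) ^ 2 ≤ h ^ 3 := by
      have e : l ^ 4 * s ^ 2 ≤ R ^ 3 := by convert f2 using 1 <;> (try unfold cF) <;> ring
      calc _ = (l ^ 4 * s ^ 2) * u ^ 6 := by ring
        _ ≤ R ^ 3 * u ^ 6 := by gcongr
        _ = _ := by rw [hh, ← htP]; linear_combination P ^ 3 * t ^ 6 * e6 6
    nlinarith [show 0 < l ^ 6 by positivity]
  have hb := abs_le.1 hQh
  have gg : ∀ z e : ℝ, |e| ≤ 3 * h → l ^ 4 * z ^ 2 ≤ e ^ 3 → |z| ≤ 15 * l := by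
    intro z e he hz
    apply key _ _ (by norm_num)
    have : e ^ 3 ≤ (3 * h) ^ 3 := (Odd.strictMono_pow (by decide : Odd 3)).monotone (abs_le.1 he).2
    nlinarith [show 0 < l ^ 6 by positivity]
  have g3 : |cF p q r s t u| ≤ 15 * l := by
    refine gg _ (2 * h + Q) (by rw [abs_le]; constructor <;> linarith) (f3.trans (le_of_eq ?_))
    congr 1
    rw [hh, ← htP]; linear_combination Q * htu + P * t ^ 2 * (e6 2)
  have g4 : |cF p q r s t (-u)| ≤ 15 * l := by
    refine gg _ (2 * h - Q) (by rw [abs_le]; constructor <;> linarith) (f4.trans (le_of_eq ?_))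
    congr 1
    rw [hh, ← htP]; linear_combination (-Q) * htu + P * t ^ 2 * (e6 2)
  have e3 : cF p q r s t u = p * t ^ 3 + 3 * (q * t) + 3 * (r * u) + s * u ^ 3 := by
    unfold cF; linear_combination (3 * q * t + 3 * r * u) * htu
  have e4 : cF p q r s t (-u) = p * t ^ 3 - 3 * (q * t) + 3 * (r * u) - s * u ^ 3 := by
    unfold cF; linear_combination (- 3 * q * t + 3 * r * u) * htu
  rw [e3] at g3
  rw [e4] at g4
  rw [abs_le] at g1 g2 g3 g4
  have g5 : |q * t| ≤ 24 * l := by rw [abs_le]; constructor <;> linarith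
  have g6 : |r * u| ≤ 24 * l := by rw [abs_le]; constructor <;> linarith
  have g1 : |p * t ^ 3| ≤ 24 * l := by rw [abs_le]; constructor <;> linarith
  have g2 : |s * u ^ 3| ≤ 24 * l := by rw [abs_le]; constructor <;> linarith
  have t0 : 0 < t := by linarith
  refine ⟨t, ht, ?_, ?_, ?_, ?_, Or.inl ?_⟩
  · rwa [abs_mul, abs_of_pos (by positivity : 0 < t ^ 3)] at g1
  · rwa [abs_mul, abs_of_pos t0] at g5
  · rw [abs_mul, abs_of_pos hu] at g6
    calc |r| = (|r| * u) * t := by linear_combination (-|r|) * htu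
      _ ≤ _ := by gcongr
  · rw [abs_mul, abs_of_pos (by positivity : 0 < u ^ 3)] at g2
    calc |s| = (|s| * u ^ 3) * t ^ 3 := by linear_combination (-|s|) * e6 3
      _ ≤ _ := by gcongr
  · rw [show p * s - q * r = -Q by rw [eQ]; ring, abs_neg]
    calc |Q| * t ^ 2 ≤ P * t ^ 2 := by gcongr
      _ = h := by rw [hh]; ring
      _ ≤ _ := by nlinarith

set_option maxHeartbeats 1000000 in
lemma boxB (l α β γ δ : ℝ) (hl : 0 < l) (hD : (α * δ - β * γ) ^ 6 = 4 * l ^ 4)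
    (h1 : |2 * α * β - α * δ - β * γ + 2 * γ * δ| ≤ α ^ 2 - α * γ + γ ^ 2)
    (h2 : α ^ 2 - α * γ + γ ^ 2 ≤ β ^ 2 - β * δ + δ ^ 2) :
    InBox l (α ^ 3 + γ ^ 3) (α ^ 2 * β + γ ^ 2 * δ) (α * β ^ 2 + γ * δ ^ 2) (β ^ 3 + δ ^ 3) := by
  obtain ⟨L, M, N, hL, hM, hN⟩ : ∃ L M N : ℝ, L = α ^ 2 - α * γ + γ ^ 2 ∧
    M = 2 * α * β - α * δ - β * γ + 2 * γ * δ ∧ N = β ^ 2 - β * δ + δ ^ 2 := ⟨_, _, _, rfl, rfl, rfl⟩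
  have hL0 : 0 < L := by
    rcases eq_or_ne α 0 with h | h
    · rcases eq_or_ne γ 0 with h' | h'
      · rw [h, h'] at hD; ring_nf at hD; exact absurd hD (by positivity)
      · rw [hL]; nlinarith [sq_nonneg (2 * α - γ), show 0 < γ ^ 2 by positivity]
    · rw [hL]; nlinarith [sq_nonneg (2 * γ - α), show 0 < α ^ 2 by positivity]
  have hdisc : 4 * L * N - M ^ 2 = 3 * (α * δ - β * γ) ^ 2 := by rw [hL, hM, hN]; ring
  have he : (α + γ) ^ 2 ≤ 4 * L := by rw [hL]; nlinarith [sq_nonneg (α - γ)]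
  have hg : (β + δ) ^ 2 ≤ 4 * N := by rw [hN]; nlinarith [sq_nonneg (β - δ)]
  have ep : α ^ 3 + γ ^ 3 = (α + γ) * L := by rw [hL]; ring
  have eq : 3 * (α ^ 2 * β + γ ^ 2 * δ) = (α + γ) * M + (β + δ) * L := by rw [hL, hM]; ring
  have er : 3 * (α * β ^ 2 + γ * δ ^ 2) = (α + γ) * N + (β + δ) * M := by rw [hN, hM]; ring
  have es : β ^ 3 + δ ^ 3 = (β + δ) * N := by rw [hN]; ring
  rw [← hL, ← hM] at h1
  rw [← hL, ← hN] at h2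
  generalize α ^ 3 + γ ^ 3 = p at *
  generalize α ^ 2 * β + γ ^ 2 * δ = q at *
  generalize α * β ^ 2 + γ * δ ^ 2 = r at *
  generalize β ^ 3 + δ ^ 3 = s at *
  generalize α + γ = e at *
  generalize β + δ = g at *
  generalize α * δ - β * γ = D at *
  clear hL hM hN
  obtain ⟨t, u, ht, hu, htu, htP⟩ := exists_t _ _ hL0 h2
  have t0 : 0 < t := by linarith
  obtain ⟨h, hh⟩ : ∃ h : ℝ, h = t ^ 2 * L := ⟨_, rfl⟩
  have hpos : 0 < h := by rw [hh]; positivity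
  have hh2 : h ^ 2 = L * N := by rw [hh, ← htP]; ring
  have hQ2 : M ^ 2 ≤ L ^ 2 := by rw [← sq_abs M]; gcongr
  have hhD : h ^ 2 ≤ D ^ 2 := by nlinarith
  have hh3 : h ^ 3 ≤ 2 * l ^ 2 := by
    apply le_of_sq_le_sq _ (by positivity)
    calc (h ^ 3) ^ 2 = (h ^ 2) ^ 3 := by ring
      _ ≤ (D ^ 2) ^ 3 := by gcongr
      _ = D ^ 6 := by ring
      _ = _ := by rw [hD]; ring
  have e6 : ∀ n : ℕ, t ^ n * u ^ n = 1 := by intro n; rw [← mul_pow, htu, one_pow]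
  have hMt : |M| * t ^ 2 ≤ h := by rw [hh, mul_comm]; gcongr
  have hMh : |M| ≤ h := by
    refine le_trans ?_ hMt
    exact le_mul_of_one_le_right (abs_nonneg _) (one_le_pow₀ ht)
  have key : ∀ z c : ℝ, 0 < c → z ^ 2 ≤ c ^ 2 * l ^ 2 → |z| ≤ c * l := by
    intro z c hc hz
    apply abs_le_of_sq_le_sq _ (by positivity)
    linarith [show (c * l) ^ 2 = c ^ 2 * l ^ 2 by ring]
  have het : (e * t) ^ 2 ≤ 4 * h := by
    calc (e * t) ^ 2 = e ^ 2 * t ^ 2 := by ring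
      _ ≤ 4 * L * t ^ 2 := by gcongr
      _ = _ := by rw [hh]; ring
  have hgu : (g * u) ^ 2 ≤ 4 * h := by
    calc (g * u) ^ 2 = g ^ 2 * u ^ 2 := by ring
      _ ≤ 4 * N * u ^ 2 := by gcongr
      _ = _ := by rw [hh, ← htP]; linear_combination 4 * t ^ 2 * L * e6 2
  have hNu : N * u ^ 2 = h := by rw [hh, ← htP]; linear_combination t ^ 2 * L * e6 2
  have l2 : 0 < l ^ 2 := by positivity
  have hM2 : M ^ 2 ≤ h ^ 2 := by rw [← sq_abs M]; gcongr
  have comb : ∀ a b c d : ℝ, a ^ 2 ≤ 4 * h → b ^ 2 ≤ 4 * h → c ^ 2 ≤ h ^ 2 → d ^ 2 ≤ h ^ 2 →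
      (a * c + b * d) ^ 2 ≤ 16 * h ^ 3 := by
    intro a b c d ha hb hc hd
    have i1 : a ^ 2 * c ^ 2 ≤ 4 * h * h ^ 2 := by gcongr
    have i2 : b ^ 2 * d ^ 2 ≤ 4 * h * h ^ 2 := by gcongr
    nlinarith [sq_nonneg (a * c - b * d)]
  have g1 : |p * t ^ 3| ≤ 24 * l := by
    apply key _ _ (by norm_num)
    calc (p * t ^ 3) ^ 2 = (e * t) ^ 2 * h ^ 2 := by rw [ep, hh]; ring
      _ ≤ 4 * h * h ^ 2 := by gcongr
      _ = 4 * h ^ 3 := by ring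
      _ ≤ _ := by nlinarith
  have g2 : |s * u ^ 3| ≤ 24 * l := by
    apply key _ _ (by norm_num)
    calc (s * u ^ 3) ^ 2 = (g * u) ^ 2 * (N * u ^ 2) ^ 2 := by rw [es]; ring
      _ ≤ 4 * h * h ^ 2 := by rw [hNu]; gcongr
      _ = 4 * h ^ 3 := by ring
      _ ≤ _ := by nlinarith
  have g5 : |q * t| ≤ 24 * l := by
    apply key _ _ (by norm_num)
    have e1 : 3 * (q * t) = (e * t) * M + (g * u) * h := by rw [hh]; linear_combination t * eq - g * L * t * htu
    have e2 := comb _ _ _ _ het hgu hM2 le_rfl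
    rw [← e1] at e2
    linarith [show (3 * (q * t)) ^ 2 = 9 * (q * t) ^ 2 by ring]
  have g6 : |r * u| ≤ 24 * l := by
    apply key _ _ (by norm_num)
    have e1 : 3 * (r * u) = (e * t) * h + (g * u) * M := by rw [← hNu]; linear_combination u * er - e * N * u * htu
    have e2 := comb _ _ _ _ het hgu le_rfl hM2
    rw [← e1] at e2
    linarith [show (3 * (r * u)) ^ 2 = 9 * (r * u) ^ 2 by ring]
  refine ⟨t, ht, ?_, ?_, ?_, ?_, Or.inr ?_⟩
  · rwa [abs_mul, abs_of_pos (by positivity : 0 < t ^ 3)] at g1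
  · rwa [abs_mul, abs_of_pos t0] at g5
  · rw [abs_mul, abs_of_pos hu] at g6
    calc |r| = (|r| * u) * t := by linear_combination (-|r|) * htu
      _ ≤ _ := by gcongr
  · rw [abs_mul, abs_of_pos (by positivity : 0 < u ^ 3)] at g2
    calc |s| = (|s| * u ^ 3) * t ^ 3 := by linear_combination (-|s|) * e6 3
      _ ≤ _ := by gcongr
  · have E : p * s - 9 * q * r = -(M * ((e * t) ^ 2 * h + (e * t) * (g * u) * M + (g * u) ^ 2 * h)) := by
      have i1 : p * s - 9 * q * r = -(M * (e ^ 2 * N + e * g * M + g ^ 2 * L)) := by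
        rw [ep, es]; linear_combination (-3 * r) * eq - (e * M + g * L) * er
      have i2 : (e * t) ^ 2 * h = e ^ 2 * N := by rw [← htP, hh]; ring
      have i3 : (g * u) ^ 2 * h = g ^ 2 * L := by rw [hh]; linear_combination g ^ 2 * L * e6 2
      have i4 : (e * t) * (g * u) = e * g := by linear_combination e * g * htu
      rw [i1, i2, i3, i4]
    have i : |(e * t) ^ 2 * h + (e * t) * (g * u) * M + (g * u) ^ 2 * h| ≤ 12 * h ^ 2 := by
      have j : |(e * t) * (g * u)| ≤ 4 * h := by
        rw [abs_le]; constructor <;> nlinarith [sq_nonneg (e * t + g * u), sq_nonneg (e * t - g * u)]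
      have j2 : |(e * t) * (g * u) * M| ≤ 4 * h * h := by rw [abs_mul]; gcongr
      rw [abs_le] at j2 ⊢
      have k1 : (e * t) ^ 2 * h ≤ 4 * h * h := by gcongr
      have k2 : (g * u) ^ 2 * h ≤ 4 * h * h := by gcongr
      have k3 : 0 ≤ (e * t) ^ 2 * h := by positivity
      have k4 : 0 ≤ (g * u) ^ 2 * h := by positivity
      constructor <;> nlinarith
    rw [E, abs_neg, abs_mul]
    calc _ = (|M| * t ^ 2) * |(e * t) ^ 2 * h + (e * t) * (g * u) * M + (g * u) ^ 2 * h| := by ring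
      _ ≤ h * (12 * h ^ 2) := by gcongr
      _ = 12 * h ^ 3 := by ring
      _ ≤ _ := by linarith

open WeierstrassCurve.Affine
set_option linter.unusedSimpArgs false
set_option linter.style.longLine false

lemma exists_cbrt (x : ℝ) : ∃ y : ℝ, y ^ 3 = x := by
  rcases le_total 0 x with h | h
  · exact ⟨x ^ ((3 : ℕ) : ℝ)⁻¹, Real.rpow_inv_natCast_pow h (by norm_num)⟩
  · refine ⟨-((-x) ^ ((3 : ℕ) : ℝ)⁻¹), ?_⟩
    rw [Odd.neg_pow (by decide), Real.rpow_inv_natCast_pow (by linarith) (by norm_num), neg_neg]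

lemma two_cubes (p q r s B : ℝ) (hB : 0 < B) (hD : cD p q r s = 4 * B ^ 2) :
    ∃ α β γ δ : ℝ, p = α ^ 3 + γ ^ 3 ∧ q = α ^ 2 * β + γ ^ 2 * δ ∧ r = α * β ^ 2 + γ * δ ^ 2 ∧
      s = β ^ 3 + δ ^ 3 := by
  obtain ⟨z, w, hzw⟩ : ∃ z w : ℝ, cH2 p q r s z w z w ≠ 0 := by
    by_contra! hcon
    have h1 := hcon 1 0
    have h2 := hcon 0 1
    have h3 := hcon 1 1
    unfold cH2 at h1 h2 h3
    unfold cD at hD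
    have e1 : q ^ 2 - p * r = 0 := by linarith
    have e2 : r ^ 2 - q * s = 0 := by linarith
    have e3 : q * r - p * s = 0 := by linarith
    rw [e1, e2, e3] at hD
    have : 0 < B ^ 2 := by positivity
    linarith
  obtain ⟨U, V, hU, hV⟩ : ∃ U V : ℝ, U = cG p q r s z w + 2 * B * cF p q r s z w ∧
    V = cG p q r s z w - 2 * B * cF p q r s z w := ⟨_, _, rfl, rfl⟩
  have hUV : 2 * (U * V) = cH2 p q r s z w z w ^ 3 := by
    have := cubic_id p q r s z w z w
    rw [hD] at this
    rw [hU, hV]; linear_combination this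
  have hne : U * V ≠ 0 := by
    intro h; rw [h] at hUV; exact hzw (by simpa using hUV.symm)
  have hU0 : U ≠ 0 := left_ne_zero_of_mul hne
  have hV0 : V ≠ 0 := right_ne_zero_of_mul hne
  obtain ⟨k, hk⟩ := exists_cbrt (1 / (8 * B * V))
  obtain ⟨m, hm⟩ := exists_cbrt (-1 / (8 * B * U))
  have main : ∀ x y : ℝ, cF p q r s x y = (k * (cH2 p q r s x y z w - 2 * B * (x * w - y * z))) ^ 3 +
      (m * (cH2 p q r s x y z w + 2 * B * (x * w - y * z))) ^ 3 := by
    intro x y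
    have i1 := cubic_id p q r s x y z w
    have i2 := cubic_id2 p q r s x y z w
    rw [hD] at i1 i2
    have j1 : (cH2 p q r s x y z w - 2 * B * (x * w - y * z)) ^ 3 = 2 * (cG p q r s x y + 2 * B * cF p q r s x y) * V := by
      rw [hV]; linear_combination -i1 - 2 * B * i2
    have j2 : (cH2 p q r s x y z w + 2 * B * (x * w - y * z)) ^ 3 = 2 * (cG p q r s x y - 2 * B * cF p q r s x y) * U := by
      rw [hU]; linear_combination -i1 + 2 * B * i2
    rw [mul_pow, mul_pow, j1, j2, hk, hm]
    field_simp
    ring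
  clear hUV hU hV hD
  obtain ⟨α, β, γ, δ, hm⟩ : ∃ α β γ δ : ℝ, ∀ x y : ℝ, cF p q r s x y = (α * x + β * y) ^ 3 + (γ * x + δ * y) ^ 3 := by
    refine ⟨k * (cH2 p q r s 1 0 z w - 2 * B * w), k * (cH2 p q r s 0 1 z w + 2 * B * z),
      m * (cH2 p q r s 1 0 z w + 2 * B * w), m * (cH2 p q r s 0 1 z w - 2 * B * z), fun x y ↦ ?_⟩
    rw [main x y]
    have : cH2 p q r s x y z w = cH2 p q r s 1 0 z w * x + cH2 p q r s 0 1 z w * y := by unfold cH2; ring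
    rw [this]; ring
  have h1 := hm 1 0
  have h2 := hm 0 1
  have h3 := hm 1 1
  have h4 := hm 1 (-1)
  unfold cF at h1 h2 h3 h4
  refine ⟨α, β, γ, δ, by linear_combination h1, ?_, ?_, by linear_combination h2⟩
  · linear_combination (h3 - h4 - 2 * h2) / 6
  · linear_combination (h3 + h4 - 2 * h1) / 6

/-- Integral forms in the box. -/
def BoxSet (Λ : ℝ) : Set (ℤ × ℤ × ℤ × ℤ) := {F | F.1 ≠ 0 ∧ InBox Λ F.1 F.2.1 F.2.2.1 F.2.2.2}

lemma castR_cF (p q r s x z : ℤ) : ((cF p q r s x z : ℤ) : ℝ) = cF (p : ℝ) q r s x z := by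
  unfold cF; push_cast; ring
lemma castR_aq (p q r s α β γ δ : ℤ) : ((aq p q r s α β γ δ : ℤ) : ℝ) = aq (p : ℝ) q r s α β γ δ := by
  unfold aq; push_cast; ring
lemma castR_ar (p q r s α β γ δ : ℤ) : ((ar p q r s α β γ δ : ℤ) : ℝ) = ar (p : ℝ) q r s α β γ δ := by
  unfold ar; push_cast; ring
lemma castR_cD (p q r s : ℤ) : ((cD p q r s : ℤ) : ℝ) = cD (p : ℝ) q r s := by
  unfold cD; push_cast; ring

lemma exists_four (x : ℝ) (hx : 0 < x) : ∃ l : ℝ, 0 < l ∧ l ^ 4 = x :=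
  ⟨√√x, by positivity, by
    rw [show (4 : ℕ) = 2 * 2 from rfl, pow_mul, Real.sq_sqrt (by positivity), Real.sq_sqrt (by positivity)]⟩

lemma reduceA (l p q r s : ℝ) (hl : 0 < l) (hD : cD p q r s = -4 * l ^ 4) :
    ∃ α β γ δ : ℤ, α * δ - β * γ = 1 ∧ InBox l (cF p q r s α γ) (aq p q r s α β γ δ) (ar p q r s α β γ δ)
      (cF p q r s β δ) := by
  have hl4 : 0 < l ^ 4 := by positivity
  have hD' : (q * r - p * s) ^ 2 - 4 * (q ^ 2 - p * r) * (r ^ 2 - q * s) = -4 * l ^ 4 := hD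
  have hP : 0 < q ^ 2 - p * r := by
    have := cubic_id p q r s 1 0 1 0
    have e : cH2 p q r s 1 0 1 0 = 2 * (q ^ 2 - p * r) := by unfold cH2; ring
    rw [e, hD] at this
    have h1 : 0 ≤ (q ^ 2 - p * r) ^ 3 := by
      nlinarith [sq_nonneg (cG p q r s 1 0), mul_nonneg hl4.le (sq_nonneg (cF p q r s 1 0))]
    have h2 : 0 ≤ q ^ 2 - p * r := by
      by_contra! h
      have := Odd.pow_neg (by decide : Odd 3) h
      linarith
    rcases h2.lt_or_eq with h | h
    · exact h
    · rw [← h] at hD'; nlinarith [sq_nonneg (q * r - p * s)]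
  obtain ⟨α, β, γ, δ, hdet, h1, h2⟩ := quad_reduce (q ^ 2 - p * r) (q * r - p * s) (r ^ 2 - q * s) hP (by linarith)
  have hdr : (α : ℝ) * δ - β * γ = 1 := by exact_mod_cast hdet
  refine ⟨α, β, γ, δ, hdet, boxA l _ _ _ _ hl ?_ ?_ ?_ ?_⟩
  · rw [act_P, hdr]
    rcases (abs_nonneg _ |>.trans h1).lt_or_eq with h | h
    · linarith
    · exfalso
      have e0 : 2 * (q ^ 2 - p * r) * α * β + (q * r - p * s) * (α * δ + β * γ) + 2 * (r ^ 2 - q * s) * γ * δ = 0 := by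
        rw [← h] at h1; exact abs_nonpos_iff.1 h1
      have : (2 * (q ^ 2 - p * r) * α * β + (q * r - p * s) * (α * δ + β * γ) + 2 * (r ^ 2 - q * s) * γ * δ) ^ 2
        - 4 * ((q ^ 2 - p * r) * (α : ℝ) ^ 2 + (q * r - p * s) * α * γ + (r ^ 2 - q * s) * γ ^ 2) *
        ((q ^ 2 - p * r) * (β : ℝ) ^ 2 + (q * r - p * s) * β * δ + (r ^ 2 - q * s) * δ ^ 2) =
        ((q * r - p * s) ^ 2 - 4 * (q ^ 2 - p * r) * (r ^ 2 - q * s)) * ((α : ℝ) * δ - β * γ) ^ 2 := by ring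
      rw [e0, ← h, hD', hdr] at this
      linarith
  · rw [act_P, act_Q, hdr]
    convert h1 using 1
    · congr 1; ring
    · ring
  · rw [act_P, act_R, hdr]
    convert h2 using 1 <;> ring
  · rw [act_D, hdr, hD]; ring

lemma reduceB (l p q r s : ℝ) (hl : 0 < l) (hD : cD p q r s = 4 * l ^ 4) :
    ∃ α β γ δ : ℤ, α * δ - β * γ = 1 ∧ InBox l (cF p q r s α γ) (aq p q r s α β γ δ) (ar p q r s α β γ δ)
      (cF p q r s β δ) := by
  obtain ⟨a, b, c, d, rfl, rfl, rfl, rfl⟩ := two_cubes p q r s (l ^ 2) (by positivity) (by rw [hD]; ring)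
  have hD6 : (a * d - b * c) ^ 6 = 4 * l ^ 4 := by rw [← hD]; unfold cD; ring
  have hl4 : 0 < l ^ 4 := by positivity
  have hd0 : a * d - b * c ≠ 0 := by intro h; rw [h] at hD6; norm_num at hD6; linarith
  have hdp : 0 < (a * d - b * c) ^ 2 := by positivity
  have hdisc : 4 * (a ^ 2 - a * c + c ^ 2) * (b ^ 2 - b * d + d ^ 2) - (2 * a * b - a * d - b * c + 2 * c * d) ^ 2 =
    3 * (a * d - b * c) ^ 2 := by ring
  have hL : 0 < a ^ 2 - a * c + c ^ 2 := by
    have : 0 ≤ a ^ 2 - a * c + c ^ 2 := by nlinarith [sq_nonneg (a - c), sq_nonneg (a + c)]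
    rcases this.lt_or_eq with h | h
    · exact h
    · rw [← h] at hdisc; nlinarith [sq_nonneg (2 * a * b - a * d - b * c + 2 * c * d)]
  obtain ⟨α, β, γ, δ, hdet, h1, h2⟩ := quad_reduce _ _ _ hL (by rw [hdisc]; linarith)
  have hdr : (α : ℝ) * δ - β * γ = 1 := by exact_mod_cast hdet
  refine ⟨α, β, γ, δ, hdet, ?_⟩
  convert boxB l (a * α + b * γ) (a * β + b * δ) (c * α + d * γ) (c * β + d * δ) hl ?_ ?_ ?_ using 1
  · unfold cF; ring
  · unfold aq; ring
  · unfold ar; ring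
  · unfold cF; ring
  · rw [← hD6]
    have : (a * α + b * γ) * (c * β + d * δ) - (a * β + b * δ) * (c * α + d * γ) = (a * d - b * c) * ((α : ℝ) * δ - β * γ) := by ring
    rw [this, hdr, mul_one]
  · convert h1 using 1
    · congr 1; ring
    · ring
  · convert h2 using 1 <;> ring

theorem covers_box (b : ℤ) (hb : b ≠ 0) (Λ : ℝ) (hΛ : 0 ≤ Λ) (h : |(b : ℝ)| ≤ Λ ^ 4) :
    Covers b {F | F ∈ BoxSet Λ ∧ cD F.1 F.2.1 F.2.2.1 F.2.2.2 = 4 * b} := by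
  intro p q r s hD
  have hbr : 0 < |(b : ℝ)| := by positivity
  obtain ⟨l, hl, hl4⟩ := exists_four _ hbr
  have hlL : l ≤ Λ := by
    rw [← hl4] at h; exact le_of_pow_le_pow_left₀ (by norm_num) hΛ h
  have hDr : cD (p : ℝ) q r s = 4 * b := by rw [← castR_cD, hD]; push_cast; ring
  have : ∃ α β γ δ : ℤ, α * δ - β * γ = 1 ∧ InBox l (cF (p : ℝ) q r s α γ) (aq (p : ℝ) q r s α β γ δ)
      (ar (p : ℝ) q r s α β γ δ) (cF (p : ℝ) q r s β δ) := by
    rcases lt_or_gt_of_ne hb with h | h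
    · have : (b : ℝ) < 0 := by exact_mod_cast h
      apply reduceA l _ _ _ _ hl
      rw [hDr, hl4, abs_of_neg this]; ring
    · have : (0 : ℝ) < b := by exact_mod_cast h
      apply reduceB l _ _ _ _ hl
      rw [hDr, hl4, abs_of_pos this]
  obtain ⟨α, β, γ, δ, hdet, hbox⟩ := this
  refine ⟨α, β, γ, δ, hdet, ?_⟩
  by_cases h0 : cF p q r s α γ = 0
  · exact Or.inl h0
  · refine Or.inr ⟨⟨h0, ?_⟩, ?_⟩
    · simp only [castR_cF, castR_aq, castR_ar]
      exact hbox.mono hl.le hlL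
    · simp only [act_D, hdet, hD]; ring

open WeierstrassCurve.Affine
set_option linter.unusedSimpArgs false
set_option linter.style.longLine false

lemma card_Icc_floor (a : ℝ) (ha : 0 ≤ a) : ((Finset.Icc (-⌊a⌋) ⌊a⌋).card : ℝ) ≤ 2 * a + 1 := by
  have h0 : 0 ≤ ⌊a⌋ := Int.floor_nonneg.2 ha
  have h : ((Finset.Icc (-⌊a⌋) ⌊a⌋).card : ℤ) = 2 * ⌊a⌋ + 1 := by
    rw [Int.card_Icc, Int.toNat_of_nonneg (by linarith)]; ring
  have h' : ((Finset.Icc (-⌊a⌋) ⌊a⌋).card : ℝ) = 2 * (⌊a⌋ : ℝ) + 1 := by exact_mod_cast h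
  rw [h']; linarith [Int.floor_le a]

lemma card_Icc_floor_erase (a : ℝ) (ha : 0 ≤ a) : (((Finset.Icc (-⌊a⌋) ⌊a⌋).erase 0).card : ℝ) ≤ 2 * a := by
  have h0 : 0 ≤ ⌊a⌋ := Int.floor_nonneg.2 ha
  have hm : (0 : ℤ) ∈ Finset.Icc (-⌊a⌋) ⌊a⌋ := by rw [Finset.mem_Icc]; constructor <;> linarith
  have := Finset.card_erase_add_one hm
  have := card_Icc_floor a ha
  have e : ((((Finset.Icc (-⌊a⌋) ⌊a⌋).erase 0).card + 1 : ℕ) : ℝ) = ((Finset.Icc (-⌊a⌋) ⌊a⌋).card : ℝ) := by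
    rw [‹_ + 1 = _›]
  push_cast at e; linarith

lemma mem_Icc_floor (a : ℝ) (x : ℤ) (h : |(x : ℝ)| ≤ a) : x ∈ Finset.Icc (-⌊a⌋) ⌊a⌋ := by
  rw [abs_le] at h
  rw [Finset.mem_Icc]
  refine ⟨?_, Int.le_floor.2 h.2⟩
  have : -x ≤ ⌊a⌋ := Int.le_floor.2 (by push_cast; linarith)
  linarith

lemma count_gen (S : Set (ℤ × ℤ × ℤ × ℤ)) (a b c d : ℝ) (ha : 0 ≤ a) (hb : 0 ≤ b) (hc : 0 ≤ c) (hd : 0 ≤ d)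
    (f : ℤ → ℤ → ℤ → ℝ)
    (h : ∀ p q r s : ℤ, (p, q, r, s) ∈ S → p ≠ 0 ∧ |(p : ℝ)| ≤ a ∧ |(q : ℝ)| ≤ b ∧ |(r : ℝ)| ≤ c ∧
      f p q r ≤ s ∧ (s : ℝ) ≤ f p q r + d) :
    S.Finite ∧ (S.ncard : ℝ) ≤ (2 * a) * ((2 * b + 1) * ((2 * c + 1) * (d + 1))) := by
  classical
  let T : Finset (ℤ × ℤ × ℤ × ℕ) := ((Finset.Icc (-⌊a⌋) ⌊a⌋).erase 0) ×ˢ (Finset.Icc (-⌊b⌋) ⌊b⌋) ×ˢ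
    (Finset.Icc (-⌊c⌋) ⌊c⌋) ×ˢ (Finset.range (⌊d⌋₊ + 1))
  let g : ℤ × ℤ × ℤ × ℕ → ℤ × ℤ × ℤ × ℤ := fun x ↦ (x.1, x.2.1, x.2.2.1, ⌈f x.1 x.2.1 x.2.2.1⌉ + x.2.2.2)
  have hsub : S ⊆ ((T.image g : Finset _) : Set _) := by
    rintro ⟨p, q, r, s⟩ hF
    obtain ⟨h0, h1, h2, h3, h4, h5⟩ := h p q r s hF
    have h6 : ⌈f p q r⌉ ≤ s := Int.ceil_le.2 h4
    rw [Finset.mem_coe, Finset.mem_image]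
    refine ⟨(p, q, r, (s - ⌈f p q r⌉).toNat), ?_, ?_⟩
    · simp only [T, Finset.mem_product, Finset.mem_erase, Finset.mem_range]
      refine ⟨⟨h0, mem_Icc_floor _ _ h1⟩, mem_Icc_floor _ _ h2, mem_Icc_floor _ _ h3, ?_⟩
      rw [Nat.lt_succ_iff]
      apply Nat.le_floor
      have : (((s - ⌈f p q r⌉).toNat : ℤ) : ℝ) = ((s - ⌈f p q r⌉ : ℤ) : ℝ) := by
        rw [Int.toNat_of_nonneg (by linarith)]
      rw [← Int.cast_natCast, this]
      push_cast
      linarith [Int.le_ceil (f p q r)]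
    · simp only [g]
      rw [Int.toNat_of_nonneg (by linarith)]
      simp
  refine ⟨(Finset.finite_toSet _).subset hsub, ?_⟩
  have h1 : S.ncard ≤ T.card := by
    refine (Set.ncard_le_ncard hsub (Finset.finite_toSet _)).trans ?_
    rw [Set.ncard_coe_finset]
    exact Finset.card_image_le
  have h2 : (T.card : ℝ) ≤ (2 * a) * ((2 * b + 1) * ((2 * c + 1) * (d + 1))) := by
    simp only [T, Finset.card_product, Finset.card_range]
    push_cast
    have e1 := card_Icc_floor_erase a ha
    have e2 := card_Icc_floor b hb
    have e3 := card_Icc_floor c hc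
    have e4 := Nat.floor_le hd
    gcongr
  exact le_trans (by exact_mod_cast h1) h2

/-- one dyadic piece -/
def Dy (A T : ℝ) : Set (ℤ × ℤ × ℤ × ℤ) := {F | F.1 ≠ 0 ∧ |(F.1 : ℝ)| * T ^ 3 ≤ A ∧ |(F.2.1 : ℝ)| * T ≤ A ∧
  |(F.2.2.1 : ℝ)| ≤ 2 * A * T ∧ |(F.2.2.2 : ℝ)| ≤ 8 * A * T ^ 3 ∧
  ∃ c : ℝ, (c = 1 ∨ c = 9) ∧ |(F.1 : ℝ) * F.2.2.2 - c * F.2.1 * F.2.2.1| * T ^ 2 ≤ A ^ 2}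

lemma Dy_small (A T : ℝ) (hT : 1 ≤ T) (hA : 1 ≤ A) (hTA : T ^ 3 ≤ A) :
    {F | F ∈ Dy A T ∧ |(F.1 : ℝ)| * T ^ 4 ≤ A}.Finite ∧
    ({F | F ∈ Dy A T ∧ |(F.1 : ℝ)| * T ^ 4 ≤ A}.ncard : ℝ) ≤ 510 * (A ^ 4 / T) := by
  have T0 : 0 < T := by linarith
  have hTA' : T ≤ A := le_trans (le_self_pow₀ hT (by norm_num)) hTA
  have := count_gen {F | F ∈ Dy A T ∧ |(F.1 : ℝ)| * T ^ 4 ≤ A} (A / T ^ 4) (A / T) (2 * A * T) (16 * A * T ^ 3)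
    (by positivity) (by positivity) (by positivity) (by positivity) (fun _ _ _ ↦ -(8 * A * T ^ 3)) (by
      rintro p q r s ⟨⟨h0, h1, h2, h3, h4, -⟩, h5⟩
      rw [abs_le] at h4
      refine ⟨h0, ?_, ?_, h3, h4.1, ?_⟩
      · rw [le_div_iff₀ (by positivity)]; exact h5
      · rw [le_div_iff₀ (by positivity)]; exact h2
      · linarith [h4.2])
  refine ⟨this.1, this.2.trans ?_⟩
  have e1 : 2 * (A / T) + 1 ≤ 3 * (A / T) := by
    have : 1 ≤ A / T := by rw [le_div_iff₀ T0]; linarith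
    linarith
  have e2 : 2 * (2 * A * T) + 1 ≤ 5 * (A * T) := by nlinarith
  have e3 : 16 * A * T ^ 3 + 1 ≤ 17 * (A * T ^ 3) := by nlinarith [one_le_pow₀ (n := 3) hT]
  calc _ ≤ 2 * (A / T ^ 4) * ((3 * (A / T)) * ((5 * (A * T)) * (17 * (A * T ^ 3)))) := by gcongr
    _ = _ := by field_simp; ring

lemma Dy_large (A T c : ℝ) (hT : 1 ≤ T) (hA : 1 ≤ A) (hTA : T ^ 3 ≤ A) :
    {F | F ∈ Dy A T ∧ A ≤ |(F.1 : ℝ)| * T ^ 4 ∧ |(F.1 : ℝ) * F.2.2.2 - c * F.2.1 * F.2.2.1| * T ^ 2 ≤ A ^ 2}.Finite ∧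
    ({F | F ∈ Dy A T ∧ A ≤ |(F.1 : ℝ)| * T ^ 4 ∧ |(F.1 : ℝ) * F.2.2.2 - c * F.2.1 * F.2.2.1| * T ^ 2 ≤ A ^ 2}.ncard : ℝ)
      ≤ 90 * (A ^ 4 / T) := by
  have T0 : 0 < T := by linarith
  have hTA' : T ≤ A := le_trans (le_self_pow₀ hT (by norm_num)) hTA
  have := count_gen {F | F ∈ Dy A T ∧ A ≤ |(F.1 : ℝ)| * T ^ 4 ∧ |(F.1 : ℝ) * F.2.2.2 - c * F.2.1 * F.2.2.1| * T ^ 2 ≤ A ^ 2}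
    (A / T ^ 3) (A / T) (2 * A * T) (2 * A * T ^ 2)
    (by positivity) (by positivity) (by positivity) (by positivity)
    (fun p q r ↦ c * q * r / p - A * T ^ 2) (by
      rintro p q r s ⟨⟨h0, h1, h2, h3, h4, -⟩, h5, h6⟩
      simp only at h0 h1 h2 h3 h4 h5 h6
      have hp : (p : ℝ) ≠ 0 := by exact_mod_cast h0
      have hp' : 0 < |(p : ℝ)| := by positivity
      have key : |(s : ℝ) - c * q * r / p| ≤ A * T ^ 2 := by
        have e : (p : ℝ) * s - c * q * r = p * (s - c * q * r / p) := by field_simp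
        rw [e, abs_mul] at h6
        have h7 : A * |(s : ℝ) - c * q * r / p| ≤ A * (A * T ^ 2) := by
          calc A * |(s : ℝ) - c * q * r / p| ≤ (|(p : ℝ)| * T ^ 4) * |(s : ℝ) - c * q * r / p| := by gcongr
            _ = (|(p : ℝ)| * |(s : ℝ) - c * q * r / p| * T ^ 2) * T ^ 2 := by ring
            _ ≤ A ^ 2 * T ^ 2 := by gcongr
            _ = _ := by ring
        exact le_of_mul_le_mul_left h7 (by linarith)
      rw [abs_le] at key
      refine ⟨h0, ?_, ?_, h3, by linarith [key.1], by linarith [key.2]⟩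
      · rw [le_div_iff₀ (by positivity)]; exact h1
      · rw [le_div_iff₀ (by positivity)]; exact h2)
  refine ⟨this.1, this.2.trans ?_⟩
  have e1 : 2 * (A / T) + 1 ≤ 3 * (A / T) := by
    have : 1 ≤ A / T := by rw [le_div_iff₀ T0]; linarith
    linarith
  have e2 : 2 * (2 * A * T) + 1 ≤ 5 * (A * T) := by nlinarith
  have e3 : 2 * A * T ^ 2 + 1 ≤ 3 * (A * T ^ 2) := by nlinarith [one_le_pow₀ (n := 2) hT]
  calc _ ≤ 2 * (A / T ^ 3) * ((3 * (A / T)) * ((5 * (A * T)) * (3 * (A * T ^ 2)))) := by gcongr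
    _ = _ := by field_simp; ring

lemma Dy_count (A T : ℝ) (hT : 1 ≤ T) (hA : 1 ≤ A) :
    (Dy A T).Finite ∧ ((Dy A T).ncard : ℝ) ≤ 690 * (A ^ 4 / T) := by
  by_cases hTA : T ^ 3 ≤ A
  · obtain ⟨f1, c1⟩ := Dy_small A T hT hA hTA
    obtain ⟨f2, c2⟩ := Dy_large A T 1 hT hA hTA
    obtain ⟨f3, c3⟩ := Dy_large A T 9 hT hA hTA
    have hsub : Dy A T ⊆ ({F | F ∈ Dy A T ∧ |(F.1 : ℝ)| * T ^ 4 ≤ A} ∪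
      {F | F ∈ Dy A T ∧ A ≤ |(F.1 : ℝ)| * T ^ 4 ∧ |(F.1 : ℝ) * F.2.2.2 - 1 * F.2.1 * F.2.2.1| * T ^ 2 ≤ A ^ 2}) ∪
      {F | F ∈ Dy A T ∧ A ≤ |(F.1 : ℝ)| * T ^ 4 ∧ |(F.1 : ℝ) * F.2.2.2 - 9 * F.2.1 * F.2.2.1| * T ^ 2 ≤ A ^ 2} := by
      intro F hF
      rcases le_total (|(F.1 : ℝ)| * T ^ 4) A with h | h
      · exact Or.inl (Or.inl ⟨hF, h⟩)
      · obtain ⟨c, hc, h6⟩ := hF.2.2.2.2.2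
        rcases hc with rfl | rfl
        · exact Or.inl (Or.inr ⟨hF, h, h6⟩)
        · exact Or.inr ⟨hF, h, h6⟩
    have ff := (f1.union f2).union f3
    refine ⟨ff.subset hsub, ?_⟩
    have := ((Set.ncard_le_ncard hsub ff).trans (Set.ncard_union_le _ _)).trans
      (Nat.add_le_add_right (Set.ncard_union_le _ _) _)
    have this' : ((Dy A T).ncard : ℝ) ≤ _ := Nat.cast_le.2 this
    push_cast at this'
    linarith
  · have : Dy A T = ∅ := by
      rw [Set.eq_empty_iff_forall_notMem]
      rintro ⟨p, q, r, s⟩ ⟨h0, h1, -⟩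
      apply hTA
      refine le_trans ?_ h1
      have : (1 : ℝ) ≤ |(p : ℝ)| := by exact_mod_cast Int.one_le_abs h0
      exact le_mul_of_one_le_left (by positivity) this
    rw [this]
    refine ⟨Set.finite_empty, ?_⟩
    rw [Set.ncard_empty]
    push_cast; positivity

lemma box_sub (Λ : ℝ) (hΛ : 1 ≤ Λ) : ∃ K : ℕ, BoxSet Λ ⊆ ⋃ k ∈ Finset.range K, Dy (24 * Λ) (2 ^ k) := by
  obtain ⟨K, hK⟩ := pow_unbounded_of_one_lt (24 * Λ) (by norm_num : (1 : ℝ) < 2)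
  refine ⟨K, ?_⟩
  rintro ⟨p, q, r, s⟩ ⟨h0, t, ht, h1, h2, h3, h4, h5⟩
  simp only at h0 h1 h2 h3 h4 h5
  obtain ⟨k, hk1, hk2⟩ := exists_nat_pow_near ht (by norm_num : (1 : ℝ) < 2)
  have hp : (1 : ℝ) ≤ |(p : ℝ)| := by exact_mod_cast Int.one_le_abs h0
  have htA : t ≤ 24 * Λ := by
    refine le_trans (le_self_pow₀ ht (by norm_num : 3 ≠ 0)) (le_trans ?_ h1)
    exact le_mul_of_one_le_left (by positivity) hp
  have hkK : k < K := by
    by_contra! h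
    have : (2 : ℝ) ^ K ≤ 2 ^ k := pow_le_pow_right₀ (by norm_num) h
    linarith
  rw [Set.mem_iUnion₂]
  refine ⟨k, Finset.mem_range.2 hkK, h0, le_trans (by gcongr) h1, le_trans (by gcongr) h2, h3.trans ?_, h4.trans ?_, ?_⟩
  · rw [pow_succ] at hk2
    nlinarith
  · have : t ^ 3 ≤ (2 ^ (k + 1)) ^ 3 := by gcongr
    have e : ((2 : ℝ) ^ (k + 1)) ^ 3 = 8 * (2 ^ k) ^ 3 := by rw [pow_succ]; ring
    rw [e] at this
    calc _ ≤ 24 * Λ * (8 * (2 ^ k) ^ 3) := by gcongr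
      _ = _ := by ring
  · have e : 24 * Λ ^ 2 ≤ (24 * Λ) ^ 2 := by nlinarith
    rcases h5 with h5 | h5
    · refine ⟨1, Or.inl rfl, ?_⟩
      simp only [one_mul]
      refine le_trans ?_ (h5.trans e)
      gcongr
    · refine ⟨9, Or.inr rfl, ?_⟩
      refine le_trans ?_ (h5.trans e)
      gcongr

theorem box_count : ∃ C : ℝ, 0 < C ∧ ∀ Λ : ℝ, 1 ≤ Λ → (BoxSet Λ).Finite ∧ ((BoxSet Λ).ncard : ℝ) ≤ C * Λ ^ 4 := by
  refine ⟨1380 * 24 ^ 4, by norm_num, fun Λ hΛ ↦ ?_⟩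
  obtain ⟨K, hK⟩ := box_sub Λ hΛ
  have hA : 1 ≤ 24 * Λ := by linarith
  have h1 : ∀ k : ℕ, (1 : ℝ) ≤ 2 ^ k := fun k ↦ one_le_pow₀ (by norm_num)
  have hf : (⋃ k ∈ Finset.range K, Dy (24 * Λ) (2 ^ k)).Finite :=
    Set.Finite.biUnion (Finset.finite_toSet _) (fun k _ ↦ (Dy_count _ _ (h1 k) hA).1)
  refine ⟨hf.subset hK, ?_⟩
  have h2 : (BoxSet Λ).ncard ≤ ∑ k ∈ Finset.range K, (Dy (24 * Λ) (2 ^ k)).ncard :=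
    (Set.ncard_le_ncard hK hf).trans (Finset.set_ncard_biUnion_le _ _)
  have h3 : ((BoxSet Λ).ncard : ℝ) ≤ ∑ k ∈ Finset.range K, ((Dy (24 * Λ) (2 ^ k)).ncard : ℝ) := by exact_mod_cast h2
  refine h3.trans ?_
  calc _ ≤ ∑ k ∈ Finset.range K, 690 * (24 * Λ) ^ 4 * (1 / 2) ^ k := by
        apply Finset.sum_le_sum
        intro k _
        refine (Dy_count _ _ (h1 k) hA).2.trans (le_of_eq ?_)
        rw [one_div, inv_pow]; field_simp
    _ = 690 * (24 * Λ) ^ 4 * ∑ k ∈ Finset.range K, (1 / 2 : ℝ) ^ k := by rw [Finset.mul_sum]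
    _ ≤ 690 * (24 * Λ) ^ 4 * 2 := by gcongr; exact sum_geometric_two_le K
    _ = _ := by ring

set_option linter.unusedSimpArgs false
set_option linter.style.longLine false

/-- The sum of reciprocals of the primes up to `N`. -/
noncomputable def pmu (N : ℕ) : ℝ := ∑ p ∈ (N + 1).primesBelow, (1 : ℝ) / p

lemma tele_sum (m : ℕ) : ∑ n ∈ Finset.range (m + 2), (1 : ℝ) / (n * (n - 1)) = 1 - 1 / (m + 1) := by
  induction m with
  | zero => simp [Finset.sum_range_succ]
  | succ m ih =>
    rw [Finset.sum_range_succ, ih]; push_cast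
    have : (m : ℝ) + 1 ≠ 0 := by positivity
    have : (m : ℝ) + 2 ≠ 0 := by positivity
    field_simp
    ring_nf
    field_simp
    ring

lemma pmu_lower (N : ℕ) (hN : 2 ≤ N) : Real.log (Real.log (N + 1)) ≤ pmu N + 1 := by
  let f : ℕ →* ℝ := { toFun := fun n ↦ (n : ℝ)⁻¹, map_one' := by simp, map_mul' := by intro x y; push_cast; rw [mul_inv] }
  have hf : ∀ n, f n = (n : ℝ)⁻¹ := fun n ↦ rfl
  have hlt : ∀ {p : ℕ}, p.Prime → ‖f p‖ < 1 := by
    intro p hp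
    have : (1 : ℝ) < p := by exact_mod_cast hp.one_lt
    rw [hf, norm_inv, Real.norm_natCast]
    exact inv_lt_one_of_one_lt₀ this
  obtain ⟨hs, hsum⟩ := EulerProduct.summable_and_hasSum_smoothNumbers_prod_primesBelow_geometric hlt (N + 1)
  have h1 : Real.log (N + 1) ≤ ∏ p ∈ (N + 1).primesBelow, (1 - f p)⁻¹ := by
    have a1 := log_add_one_le_harmonic N
    have a2 : ((harmonic N : ℚ) : ℝ) = ∑ n ∈ Finset.Icc 1 N, f n := by
      rw [harmonic_eq_sum_Icc]; push_cast; rfl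
    have a3 : ∑ n ∈ Finset.Icc 1 N, f n ≤ ∏ p ∈ (N + 1).primesBelow, (1 - f p)⁻¹ := by
      have hmem : ∀ n : Finset.Icc 1 N, (n : ℕ) ∈ (N + 1).smoothNumbers := by
        intro n
        have := Finset.mem_Icc.1 n.2
        exact Nat.mem_smoothNumbers_of_lt (by omega) (by omega)
      have e : ∑ n ∈ Finset.Icc 1 N, f n = ∑ n ∈ (Finset.Icc 1 N).attach.map ⟨fun n : Finset.Icc 1 N ↦ (⟨n, hmem n⟩ : (N + 1).smoothNumbers), by
          intro a b h; rw [Subtype.mk.injEq] at h; exact Subtype.ext h⟩, f n := by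
        rw [Finset.sum_map]
        exact (Finset.sum_attach _ (fun n ↦ f n)).symm
      rw [e]
      refine sum_le_hasSum _ (fun i _ ↦ ?_) hsum
      rw [hf]; positivity
    calc _ ≤ _ := by exact_mod_cast a1
      _ = _ := a2
      _ ≤ _ := a3
  have hlog : 0 < Real.log (N + 1) := Real.log_pos (by
    have : (2 : ℝ) ≤ N := by exact_mod_cast hN
    linarith)
  have hpos : ∀ p ∈ (N + 1).primesBelow, (1 - f p)⁻¹ ≠ 0 := by
    intro p hp
    have := hlt (Nat.prime_of_mem_primesBelow hp)
    rw [Real.norm_eq_abs, abs_lt] at this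
    have : 1 - f p ≠ 0 := by linarith [this.2]
    positivity
  have h2 := Real.log_le_log hlog h1
  rw [Real.log_prod hpos] at h2
  refine h2.trans ?_
  have h3 : ∑ p ∈ (N + 1).primesBelow, Real.log ((1 - f p)⁻¹) ≤
      ∑ p ∈ (N + 1).primesBelow, ((1 : ℝ) / p + 1 / (p * (p - 1))) := by
    apply Finset.sum_le_sum
    intro p hp
    have hp1 : (1 : ℝ) < p := by exact_mod_cast (Nat.prime_of_mem_primesBelow hp).one_lt
    have h0 : (p : ℝ) - 1 ≠ 0 := by linarith
    have hi : (1 - f p)⁻¹ = p / (p - 1) := by rw [hf]; field_simp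
    rw [hi]
    refine (Real.log_le_sub_one_of_pos (div_pos (by linarith) (by linarith))).trans (le_of_eq ?_)
    field_simp
    ring
  refine h3.trans ?_
  rw [Finset.sum_add_distrib]
  unfold pmu
  gcongr
  have h4 : ∑ p ∈ (N + 1).primesBelow, (1 : ℝ) / (p * (p - 1)) ≤ ∑ n ∈ Finset.range (N + 2), (1 : ℝ) / (n * (n - 1)) := by
    apply Finset.sum_le_sum_of_subset_of_nonneg
    · intro p hp
      have := Nat.lt_of_mem_primesBelow hp
      rw [Finset.mem_range]; omega
    · intro n _ _
      rcases Nat.eq_zero_or_pos n with h | h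
      · subst h; simp
      · have : (1 : ℝ) ≤ n := by exact_mod_cast h
        apply div_nonneg zero_le_one
        apply mul_nonneg <;> linarith
  rw [tele_sum] at h4
  have : (0 : ℝ) ≤ 1 / (N + 1) := by positivity
  linarith

lemma omega_sum (N n : ℕ) (hn : n ∈ Finset.Ioc 0 N) :
    (n.primeFactors.card : ℝ) = ∑ p ∈ (N + 1).primesBelow, if p ∣ n then (1 : ℝ) else 0 := by
  rw [Finset.sum_boole]
  congr 2
  ext p
  rw [Finset.mem_Ioc] at hn
  rw [Nat.mem_primeFactors, Finset.mem_filter, Nat.mem_primesBelow]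
  constructor
  · rintro ⟨h1, h2, h3⟩
    have := Nat.le_of_dvd hn.1 h2
    exact ⟨⟨by omega, h1⟩, h2⟩
  · rintro ⟨⟨h1, h2⟩, h3⟩
    exact ⟨h2, h3, by omega⟩

lemma card_dvd (N d : ℕ) : ∑ n ∈ Finset.Ioc 0 N, (if d ∣ n then (1 : ℝ) else 0) = (N / d : ℕ) := by
  rw [Finset.sum_boole, Nat.Ioc_filter_dvd_card_eq_div]

lemma turan_first (N : ℕ) : N * pmu N - N ≤ ∑ n ∈ Finset.Ioc 0 N, (n.primeFactors.card : ℝ) := by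
  rw [Finset.sum_congr rfl (omega_sum N), Finset.sum_comm]
  simp_rw [card_dvd]
  have h1 : ∀ p ∈ (N + 1).primesBelow, (N : ℝ) * (1 / p) - 1 ≤ (N / p : ℕ) := by
    intro p _
    have := Nat.lt_floor_add_one ((N : ℝ) / p)
    rw [Nat.floor_div_eq_div] at this
    rw [mul_one_div]; linarith
  refine le_trans ?_ (Finset.sum_le_sum h1)
  rw [Finset.sum_sub_distrib, ← Finset.mul_sum]
  unfold pmu
  have : (((N + 1).primesBelow.card : ℕ) : ℝ) ≤ N := by
    have h : (N + 1).primesBelow ⊆ Finset.Ioc 0 N := by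
      intro p hp
      have := Nat.lt_of_mem_primesBelow hp
      have := (Nat.prime_of_mem_primesBelow hp).pos
      rw [Finset.mem_Ioc]; omega
    have := Finset.card_le_card h
    rw [Nat.card_Ioc] at this
    exact_mod_cast this
  simp only [Finset.sum_const, nsmul_eq_mul, mul_one]
  linarith

lemma turan_second (N : ℕ) : ∑ n ∈ Finset.Ioc 0 N, (n.primeFactors.card : ℝ) ^ 2 ≤ N * pmu N ^ 2 + N * pmu N := by
  have e : ∀ n ∈ Finset.Ioc 0 N, (n.primeFactors.card : ℝ) ^ 2 =
      ∑ p ∈ (N + 1).primesBelow, ∑ q ∈ (N + 1).primesBelow, if p ∣ n ∧ q ∣ n then (1 : ℝ) else 0 := by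
    intro n hn
    rw [omega_sum N n hn, sq, Finset.sum_mul_sum]
    refine Finset.sum_congr rfl fun p _ ↦ Finset.sum_congr rfl fun q _ ↦ ?_
    by_cases h1 : p ∣ n <;> by_cases h2 : q ∣ n <;> simp [h1, h2]
  rw [Finset.sum_congr rfl e, Finset.sum_comm]
  have b : ∀ p ∈ (N + 1).primesBelow, ∑ n ∈ Finset.Ioc 0 N, ∑ q ∈ (N + 1).primesBelow, (if p ∣ n ∧ q ∣ n then (1 : ℝ) else 0)
      ≤ ∑ q ∈ (N + 1).primesBelow, ((N : ℝ) * ((1 / p) * (1 / q)) + if p = q then (N : ℝ) * (1 / p) else 0) := by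
    intro p hp
    rw [Finset.sum_comm]
    apply Finset.sum_le_sum
    intro q hq
    by_cases hpq : p = q
    · subst hpq
      simp only [and_self, if_true]
      rw [card_dvd]
      have : ((N / p : ℕ) : ℝ) ≤ N / p := Nat.cast_div_le
      have e5 : (N : ℝ) * (1 / p) = N / p := mul_one_div _ _
      have : 0 ≤ (N : ℝ) * (1 / p * (1 / p)) := by positivity
      linarith
    · simp only [hpq, if_false, add_zero]
      have hc : Nat.Coprime p q := (Nat.coprime_primes (Nat.prime_of_mem_primesBelow hp) (Nat.prime_of_mem_primesBelow hq)).2 hpq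
      have e : ∀ n, (p ∣ n ∧ q ∣ n) ↔ p * q ∣ n := fun n ↦
        ⟨fun h ↦ hc.mul_dvd_of_dvd_of_dvd h.1 h.2, fun h ↦ ⟨dvd_of_mul_right_dvd h, dvd_of_mul_left_dvd h⟩⟩
      simp_rw [e]
      rw [card_dvd]
      refine Nat.cast_div_le.trans (le_of_eq ?_)
      push_cast
      rw [div_mul_div_comm, one_mul, mul_one_div]
  refine (Finset.sum_le_sum b).trans (le_of_eq ?_)
  simp_rw [Finset.sum_add_distrib, Finset.sum_ite_eq]
  congr 1
  · unfold pmu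
    rw [sq, Finset.sum_mul_sum, Finset.mul_sum]
    simp_rw [Finset.mul_sum]
  · unfold pmu
    rw [Finset.mul_sum]
    exact Finset.sum_congr rfl fun p hp ↦ by rw [if_pos hp]

lemma pmu_nonneg (N : ℕ) : 0 ≤ pmu N := Finset.sum_nonneg fun p _ ↦ by positivity

lemma turan (N : ℕ) : ∑ n ∈ Finset.Ioc 0 N, ((n.primeFactors.card : ℝ) - pmu N) ^ 2 ≤ 3 * N * pmu N := by
  have e : ∑ n ∈ Finset.Ioc 0 N, ((n.primeFactors.card : ℝ) - pmu N) ^ 2 =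
      ∑ n ∈ Finset.Ioc 0 N, (n.primeFactors.card : ℝ) ^ 2 - 2 * pmu N * ∑ n ∈ Finset.Ioc 0 N, (n.primeFactors.card : ℝ)
      + N * pmu N ^ 2 := by
    rw [Finset.mul_sum, ← Finset.sum_sub_distrib]
    have : (N : ℝ) * pmu N ^ 2 = ∑ n ∈ Finset.Ioc 0 N, pmu N ^ 2 := by simp
    rw [this, ← Finset.sum_add_distrib]
    exact Finset.sum_congr rfl fun n _ ↦ by ring
  rw [e]
  have h1 := turan_first N
  have h2 := turan_second N
  have h3 := mul_le_mul_of_nonneg_left h1 (by linarith [pmu_nonneg N] : 0 ≤ 2 * pmu N)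
  linarith [show 2 * pmu N * (N * pmu N - N) = 2 * N * pmu N ^ 2 - 2 * N * pmu N by ring]

theorem turan_tail (N : ℕ) (h : 0 < pmu N) :
    (((Finset.Ioc 0 N).filter (fun n ↦ (n.primeFactors.card : ℝ) ≤ pmu N / 2)).card : ℝ) ≤ 12 * N / pmu N := by
  have h1 := turan N
  have h2 : (((Finset.Ioc 0 N).filter (fun n ↦ (n.primeFactors.card : ℝ) ≤ pmu N / 2)).card : ℝ) * (pmu N / 2) ^ 2 ≤
      ∑ n ∈ Finset.Ioc 0 N, ((n.primeFactors.card : ℝ) - pmu N) ^ 2 := by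
    rw [← nsmul_eq_mul]
    refine (Finset.card_nsmul_le_sum _ (fun n ↦ ((n.primeFactors.card : ℝ) - pmu N) ^ 2) _ ?_).trans
      (Finset.sum_le_sum_of_subset_of_nonneg (Finset.filter_subset _ _) (fun _ _ _ ↦ sq_nonneg _))
    intro n hn
    have := (Finset.mem_filter.1 hn).2
    nlinarith
  rw [le_div_iff₀ h]
  have h3 := h2.trans h1
  have : pmu N * (((Finset.Ioc 0 N).filter (fun n ↦ (n.primeFactors.card : ℝ) ≤ pmu N / 2)).card * pmu N) ≤ pmu N * (12 * N) := by
    linarith [show (((Finset.Ioc 0 N).filter (fun n ↦ (n.primeFactors.card : ℝ) ≤ pmu N / 2)).card : ℝ) * (pmu N / 2) ^ 2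
      = pmu N * (((Finset.Ioc 0 N).filter (fun n ↦ (n.primeFactors.card : ℝ) ≤ pmu N / 2)).card * pmu N) / 4 by ring]
  exact le_of_mul_le_mul_left this h

open Classical in
lemma markov_count (U : Finset ℤ) (B : Set (ℤ × ℤ × ℤ × ℤ)) (hB : B.Finite) (k : ℤ) (hk : k ≠ 0) (Y : ℝ) :
    ((U.filter (fun a ↦ Y ≤ (({F | F ∈ B ∧ cD F.1 F.2.1 F.2.2.1 F.2.2.2 = 4 * (k * a)}.ncard : ℝ) + 1))).card : ℝ) * Y
      ≤ B.ncard + U.card := by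
  let fib : ℤ → Finset (ℤ × ℤ × ℤ × ℤ) := fun a ↦ hB.toFinset.filter (fun F ↦ cD F.1 F.2.1 F.2.2.1 F.2.2.2 = 4 * (k * a))
  have e : ∀ a, {F | F ∈ B ∧ cD F.1 F.2.1 F.2.2.1 F.2.2.2 = 4 * (k * a)}.ncard = (fib a).card := by
    intro a
    rw [← Set.ncard_coe_finset]
    congr 1
    ext F; simp [fib]
  have hsum : ∑ a ∈ U, (fib a).card ≤ B.ncard := by
    rw [← Finset.card_biUnion, Set.ncard_eq_toFinset_card B hB]
    · apply Finset.card_le_card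
      intro F hF
      obtain ⟨a, _, h⟩ := Finset.mem_biUnion.1 hF
      exact (Finset.mem_filter.1 h).1
    · intro a _ b _ hab
      rw [Function.onFun, Finset.disjoint_left]
      intro F h1 h2
      have h1 := (Finset.mem_filter.1 h1).2
      have h2 := (Finset.mem_filter.1 h2).2
      rw [h1] at h2
      apply hab
      have : k * a = k * b := by linarith
      exact mul_left_cancel₀ hk this
  simp_rw [e]
  rw [← nsmul_eq_mul]
  refine (Finset.card_nsmul_le_sum _ (fun a ↦ ((fib a).card : ℝ) + 1) _ ?_).trans ?_
  · intro a ha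
    exact (Finset.mem_filter.1 ha).2
  · refine (Finset.sum_le_sum_of_subset_of_nonneg (Finset.filter_subset _ _) (fun _ _ _ ↦ by positivity)).trans ?_
    rw [Finset.sum_add_distrib]
    simp only [Finset.sum_const, nsmul_eq_mul, mul_one]
    gcongr
    exact_mod_cast hsum

open Classical in
lemma square_count (U : Finset ℤ) (X : ℝ) (hX : 0 ≤ X) (hU : ∀ a ∈ U, |(a : ℝ)| ≤ X) (k : ℤ) (hk : k ≠ 0) (hk' : |k| ≤ 729) :
    ((U.filter (fun a ↦ ∃ r : ℚ, r ^ 2 = ((k * a : ℤ) : ℚ))).card : ℝ) ≤ 27 * √X + 1 := by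
  have hsub : U.filter (fun a ↦ ∃ r : ℚ, r ^ 2 = ((k * a : ℤ) : ℚ)) ⊆
      (Finset.range (⌊27 * √X⌋₊ + 1)).image (fun m : ℕ ↦ (m : ℤ) ^ 2 / k) := by
    intro a ha
    obtain ⟨haU, r, hr⟩ := Finset.mem_filter.1 ha
    have hsq : IsSquare ((k * a : ℤ) : ℚ) := ⟨r, by rw [← hr, sq]⟩
    rw [Rat.isSquare_intCast_iff] at hsq
    obtain ⟨m, hm⟩ := hsq
    rw [Finset.mem_image]
    have hm' : (m.natAbs : ℤ) ^ 2 = k * a := by rw [Int.natAbs_sq, hm, sq]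
    refine ⟨m.natAbs, ?_, ?_⟩
    · rw [Finset.mem_range, Nat.lt_succ_iff]
      apply Nat.le_floor
      apply le_of_sq_le_sq _ (by positivity)
      rw [mul_pow, Real.sq_sqrt hX]
      have h1 : ((m.natAbs : ℕ) : ℝ) ^ 2 = k * a := by
        rw [Nat.cast_natAbs, Int.cast_abs, sq_abs, sq]
        exact_mod_cast hm.symm
      rw [h1]
      have h2 : |(k : ℝ)| ≤ 729 := by exact_mod_cast hk'
      calc (k : ℝ) * a ≤ |(k : ℝ) * a| := le_abs_self _
        _ = |(k : ℝ)| * |(a : ℝ)| := abs_mul _ _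
        _ ≤ 729 * X := by gcongr; exact hU a haU
        _ = _ := by norm_num
    · rw [hm', Int.mul_ediv_cancel_left _ hk]
  have h1 := (Finset.card_le_card hsub).trans Finset.card_image_le
  rw [Finset.card_range] at h1
  have h2 : ((U.filter (fun a ↦ ∃ r : ℚ, r ^ 2 = ((k * a : ℤ) : ℚ))).card : ℝ) ≤ (⌊27 * √X⌋₊ : ℝ) + 1 := by exact_mod_cast h1
  linarith [Nat.floor_le (by positivity : 0 ≤ 27 * √X)]

open Classical in
lemma omega_count (U : Finset ℤ) (N : ℕ) (hU : ∀ a ∈ U, a ≠ 0 ∧ a.natAbs ≤ N) (h : 0 < pmu N) :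
    ((U.filter (fun a ↦ (omega a : ℝ) ≤ pmu N / 2)).card : ℝ) ≤ 24 * (N / pmu N) := by
  have hsub : U.filter (fun a ↦ (omega a : ℝ) ≤ pmu N / 2) ⊆
      ((Finset.Ioc 0 N).filter (fun n ↦ (n.primeFactors.card : ℝ) ≤ pmu N / 2)).image (fun n : ℕ ↦ (n : ℤ)) ∪
      ((Finset.Ioc 0 N).filter (fun n ↦ (n.primeFactors.card : ℝ) ≤ pmu N / 2)).image (fun n : ℕ ↦ -(n : ℤ)) := by
    intro a ha
    obtain ⟨haU, h1⟩ := Finset.mem_filter.1 ha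
    obtain ⟨h2, h3⟩ := hU a haU
    have hm : a.natAbs ∈ (Finset.Ioc 0 N).filter (fun n ↦ (n.primeFactors.card : ℝ) ≤ pmu N / 2) := by
      rw [Finset.mem_filter, Finset.mem_Ioc]
      exact ⟨⟨Int.natAbs_pos.2 h2, h3⟩, h1⟩
    rw [Finset.mem_union, Finset.mem_image, Finset.mem_image]
    rcases Int.natAbs_eq a with h | h
    · exact Or.inl ⟨_, hm, h.symm⟩
    · exact Or.inr ⟨_, hm, h.symm⟩
  have h1 := ((Finset.card_le_card hsub).trans (Finset.card_union_le _ _)).trans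
    (Nat.add_le_add Finset.card_image_le Finset.card_image_le)
  have h2 := turan_tail N h
  have h3 : ((U.filter (fun a ↦ (omega a : ℝ) ≤ pmu N / 2)).card : ℝ) ≤ _ := Nat.cast_le.2 h1
  push_cast at h3
  rw [mul_div_assoc] at h2
  linarith

lemma three_pow_ge (n : ℕ) : (n + 1) ^ 2 ≤ 2 * 3 ^ n := by
  induction n with
  | zero => norm_num
  | succ n ih =>
    rw [pow_succ 3]
    rcases Nat.eq_zero_or_pos n with h | h
    · subst h; norm_num
    · nlinarith

lemma rank_dichotomy (M w n n₁ n₂ : ℕ) (μ : ℝ) (hμ : 0 < μ) (hw : μ / 2 < w) (hr : w - M < n)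
    (h3 : 3 ^ n ≤ (n₁ + 1) * (n₂ + 1)) :
    μ / (3 * (M + 1)) ≤ (n₁ : ℝ) + 1 ∨ μ / (3 * (M + 1)) ≤ (n₂ : ℝ) + 1 := by
  by_contra! hcon
  obtain ⟨c1, c2⟩ := hcon
  have e1 : w ≤ n + M := by omega
  have e2 : (w : ℝ) ≤ n + M := by exact_mod_cast e1
  have e3 : μ / (2 * (M + 1)) ≤ (n : ℝ) + 1 := by
    rw [div_le_iff₀ (by positivity)]
    nlinarith [mul_nonneg (Nat.cast_nonneg (α := ℝ) n) (Nat.cast_nonneg (α := ℝ) M)]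
  have e4 : ((n : ℝ) + 1) ^ 2 ≤ 2 * (((n₁ : ℝ) + 1) * (n₂ + 1)) := by
    have := (three_pow_ge n).trans (Nat.mul_le_mul_left 2 h3)
    exact_mod_cast this
  have e5 : ((n₁ : ℝ) + 1) * (n₂ + 1) ≤ (μ / (3 * (M + 1))) * (μ / (3 * (M + 1))) := by gcongr
  have e6 : (μ / (2 * (M + 1))) ^ 2 ≤ ((n : ℝ) + 1) ^ 2 := by gcongr
  have f1 : μ / (2 * (M + 1)) = (μ / (M + 1)) / 2 := by field_simp
  have f2 : μ / (3 * (M + 1)) = (μ / (M + 1)) / 3 := by field_simp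
  rw [f1] at e6
  rw [f2] at e5
  have : 0 < μ / (M + 1) := by positivity
  nlinarith

open Classical in
lemma main_count (M : ℕ) : ∃ C : ℝ, 0 < C ∧ ∀ X : ℝ, 3 ≤ X → 0 < pmu ⌊X⌋₊ →
      (Set.ncard {a : ℤ | 0 < |a| ∧ (|a| : ℝ) ≤ X ∧
          ((omega a - M : ℕ) : Cardinal) < mwRank (Ea a)} : ℝ) ≤ C * (X / pmu ⌊X⌋₊) + 56 * √X := by
  obtain ⟨C₀, hC₀, hbox⟩ := box_count
  refine ⟨24 + 6 * (M + 1) * (729 * C₀ + 3), by positivity, fun X hX hμ ↦ ?_⟩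
  obtain ⟨Λ, hΛ0, hΛ4⟩ := exists_four (729 * X) (by linarith)
  have hΛ : 1 ≤ Λ := by
    by_contra! h
    have : Λ ^ 4 < 1 := pow_lt_one₀ hΛ0.le h (by norm_num)
    linarith
  obtain ⟨hBf, hBc⟩ := hbox Λ hΛ
  rw [hΛ4] at hBc
  set N := ⌊X⌋₊ with hN
  set μ := pmu N with hμd
  have hNX : (N : ℝ) ≤ X := Nat.floor_le (by linarith)
  set U : Finset ℤ := (Finset.Icc (-⌊X⌋) ⌊X⌋).erase 0 with hUd
  have hUc : (U.card : ℝ) ≤ 2 * X := card_Icc_floor_erase X (by linarith)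
  have hU0 : ∀ a ∈ U, a ≠ 0 := fun a ha ↦ (Finset.mem_erase.1 ha).1
  have hUX : ∀ a ∈ U, |(a : ℝ)| ≤ X := by
    intro a ha
    have := Finset.mem_Icc.1 (Finset.mem_erase.1 ha).2
    have h1 : |a| ≤ ⌊X⌋ := abs_le.2 this
    have h2 : ((|a| : ℤ) : ℝ) ≤ X := (Int.cast_le.2 h1).trans (Int.floor_le X)
    simpa using h2
  set Y : ℝ := μ / (3 * (M + 1)) with hY
  have hYpos : 0 < Y := by positivity
  let E1 := U.filter (fun a ↦ ∃ r : ℚ, r ^ 2 = ((-27 * a : ℤ) : ℚ))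
  let E2 := U.filter (fun a ↦ ∃ r : ℚ, r ^ 2 = ((729 * a : ℤ) : ℚ))
  let E3 := U.filter (fun a ↦ (omega a : ℝ) ≤ pmu N / 2)
  let E4 := U.filter (fun a ↦ Y ≤ (({F | F ∈ BoxSet Λ ∧ cD F.1 F.2.1 F.2.2.1 F.2.2.2 = 4 * (-27 * a)}.ncard : ℝ) + 1))
  let E5 := U.filter (fun a ↦ Y ≤ (({F | F ∈ BoxSet Λ ∧ cD F.1 F.2.1 F.2.2.1 F.2.2.2 = 4 * (729 * a)}.ncard : ℝ) + 1))
  have c1 : (E1.card : ℝ) ≤ 27 * √X + 1 := square_count U X (by linarith) hUX (-27) (by norm_num) (by norm_num)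
  have c2 : (E2.card : ℝ) ≤ 27 * √X + 1 := square_count U X (by linarith) hUX 729 (by norm_num) (by norm_num)
  have c3 : (E3.card : ℝ) ≤ 24 * (N / μ) := by
    refine omega_count U N (fun a ha ↦ ⟨hU0 a ha, ?_⟩) hμ
    apply Nat.le_floor
    have := hUX a ha
    rwa [Nat.cast_natAbs, Int.cast_abs]
  have c4 : (E4.card : ℝ) * Y ≤ (BoxSet Λ).ncard + U.card := markov_count U _ hBf (-27) (by norm_num) Y
  have c5 : (E5.card : ℝ) * Y ≤ (BoxSet Λ).ncard + U.card := markov_count U _ hBf 729 (by norm_num) Y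
  have cov : {a : ℤ | 0 < |a| ∧ (|a| : ℝ) ≤ X ∧ ((omega a - M : ℕ) : Cardinal) < mwRank (Ea a)} ⊆
      ((((E1 ∪ E2) ∪ E3) ∪ E4) ∪ E5 : Finset ℤ) := by
    rintro a ⟨ha0, haX, hr⟩
    have ha0 : a ≠ 0 := abs_pos.1 ha0
    have haU : a ∈ U := Finset.mem_erase.2 ⟨ha0, mem_Icc_floor X a haX⟩
    by_contra hcon
    simp only [Finset.coe_union, Set.mem_union, Finset.mem_coe, E1, E2, E3, E4, E5, Finset.mem_filter, haU, true_and,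
      not_or, not_exists] at hcon
    obtain ⟨⟨⟨⟨n1, n2⟩, n3⟩, n4⟩, n5⟩ := hcon
    have habs : ∀ k : ℤ, |k| ≤ 729 → |((k * a : ℤ) : ℝ)| ≤ Λ ^ 4 := by
      intro k hk
      rw [hΛ4]
      push_cast
      rw [abs_mul]
      have : |(k : ℝ)| ≤ 729 := by exact_mod_cast hk
      gcongr
    obtain ⟨n, hn1, hn2⟩ := rank_bound a ha0 n1 n2 _ _ (hBf.subset (Set.sep_subset _ _)) (hBf.subset (Set.sep_subset _ _))
      (covers_box (-27 * a) (mul_ne_zero (by norm_num) ha0) Λ hΛ0.le (habs _ (by norm_num)))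
      (covers_box (729 * a) (mul_ne_zero (by norm_num) ha0) Λ hΛ0.le (habs _ (by norm_num)))
    have hr2 : ((omega a - M : ℕ) : Cardinal) < (n : Cardinal) := lt_of_lt_of_le hr hn1
    have hr3 : omega a - M < n := by exact_mod_cast hr2
    rcases rank_dichotomy M (omega a) n _ _ μ hμ (not_le.1 n3) hr3 hn2 with h | h
    · exact n4 h
    · exact n5 h
  have hcard := (Set.ncard_le_ncard cov (Finset.finite_toSet _))
  rw [Set.ncard_coe_finset] at hcard
  have hcard2 : ((((E1 ∪ E2) ∪ E3) ∪ E4) ∪ E5).card ≤ E1.card + E2.card + E3.card + E4.card + E5.card := by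
    have := Finset.card_union_le (((E1 ∪ E2) ∪ E3) ∪ E4) E5
    have := Finset.card_union_le ((E1 ∪ E2) ∪ E3) E4
    have := Finset.card_union_le (E1 ∪ E2) E3
    have := Finset.card_union_le E1 E2
    omega
  have hcard3 : (Set.ncard {a : ℤ | 0 < |a| ∧ (|a| : ℝ) ≤ X ∧ ((omega a - M : ℕ) : Cardinal) < mwRank (Ea a)} : ℝ) ≤
      E1.card + E2.card + E3.card + E4.card + E5.card := by exact_mod_cast hcard.trans hcard2
  refine hcard3.trans ?_
  have hs : 1 ≤ √X := by rw [Real.one_le_sqrt]; linarith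
  have hm : ∀ e : ℝ, e * Y ≤ (BoxSet Λ).ncard + U.card → e ≤ 3 * (M + 1) * (729 * C₀ + 3) * (X / μ) := by
    intro e he
    have h1 : e * Y ≤ (729 * C₀ + 3) * X := by linarith
    rw [← le_div_iff₀ hYpos] at h1
    refine h1.trans (le_of_eq ?_)
    rw [hY]; field_simp
  have c3' : (24 : ℝ) * (N / μ) ≤ 24 * (X / μ) := by gcongr
  have := hm _ c4
  have := hm _ c5
  linarith

theorem typeI_mostly_M_Watkins (M : ℕ) :
    ∃ C : ℝ, 0 < C ∧ ∀ X : ℝ, 3 ≤ X →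
      (Set.ncard {a : ℤ | 0 < |a| ∧ (|a| : ℝ) ≤ X ∧
          ((omega a - M : ℕ) : Cardinal) < mwRank (Ea a)} : ℝ) ≤
        C * X / Real.log (Real.log X) := by
  obtain ⟨C, hC, h⟩ := main_count M
  refine ⟨2 * C + 112 + 6, by positivity, fun X hX ↦ ?_⟩
  have hlog1 : 1 < Real.log X := by
    rw [Real.lt_log_iff_exp_lt (by linarith)]
    linarith [Real.exp_one_lt_d9]
  have hll : 0 < Real.log (Real.log X) := Real.log_pos hlog1
  set l := Real.log (Real.log X) with hl
  rw [mul_div_assoc]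
  have hXl : 0 < X / l := by positivity
  by_cases h2 : 2 ≤ l
  · have hN2 : 2 ≤ ⌊X⌋₊ := Nat.le_floor (by push_cast; linarith)
    have hp := pmu_lower ⌊X⌋₊ hN2
    have hmono : l ≤ Real.log (Real.log (⌊X⌋₊ + 1)) := by
      apply Real.log_le_log (by linarith)
      apply Real.log_le_log (by linarith)
      exact (Nat.lt_floor_add_one X).le
    have hmu : l / 2 ≤ pmu ⌊X⌋₊ := by linarith
    have hmu0 : 0 < pmu ⌊X⌋₊ := by linarith
    refine (h X hX hmu0).trans ?_
    have e1 : X / pmu ⌊X⌋₊ ≤ 2 * (X / l) := by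
      rw [div_le_iff₀ hmu0]
      calc X = 2 * (X / l) * (l / 2) := by field_simp
        _ ≤ _ := by gcongr
    have e2 : √X ≤ 2 * (X / l) := by
      have hs : 0 < √X := by positivity
      have i1 : l ≤ 2 * √X := by
        have j1 := Real.log_le_sub_one_of_pos (by linarith : 0 < Real.log X)
        have j2 : Real.log X = 2 * Real.log (√X) := by
          rw [Real.log_sqrt (by linarith)]; ring
        have j3 := Real.log_le_sub_one_of_pos hs
        linarith
      rw [mul_div_assoc', le_div_iff₀ hll]
      calc √X * l ≤ √X * (2 * √X) := by gcongr
        _ = 2 * (√X * √X) := by ring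
        _ = 2 * X := by rw [Real.mul_self_sqrt (by linarith)]
    have e3 := mul_le_mul_of_nonneg_left e1 hC.le
    linarith
  · push Not at h2
    have hsub : {a : ℤ | 0 < |a| ∧ (|a| : ℝ) ≤ X ∧ ((omega a - M : ℕ) : Cardinal) < mwRank (Ea a)} ⊆
        (Finset.Icc (-⌊X⌋) ⌊X⌋ : Finset ℤ) := by
      rintro a ⟨_, haX, _⟩
      exact mem_Icc_floor X a haX
    have h3 := Set.ncard_le_ncard hsub (Finset.finite_toSet _)
    rw [Set.ncard_coe_finset] at h3
    have h4 := card_Icc_floor X (by linarith)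
    have h5 : (Set.ncard {a : ℤ | 0 < |a| ∧ (|a| : ℝ) ≤ X ∧ ((omega a - M : ℕ) : Cardinal) < mwRank (Ea a)} : ℝ) ≤ 2 * X + 1 :=
      le_trans (by exact_mod_cast h3) h4
    have h6 : X ≤ 2 * (X / l) := by
      rw [mul_div_assoc', le_div_iff₀ hll]; nlinarith
    have h7 : 0 ≤ (2 * C + 112) * (X / l) := by positivity
    linarith
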